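/- arXiv:1911.08441 — 5 statements merged into one kernel-verified Lean document; each statement's English description precedes it below -/
import Mathlib

section
/- Let J̄ ⊆ P = K[y_1, …, y_n] be a monomial ideal and let J = Φ(J̄)S ⊆ S = K[x_1, …, x_n] be its extension under the K-algebra homomorphism Φ with Φ(y_i) = x_i^{ℓ_i}. Then for every h ≥ 0, dim_K Tor_h^P(P/J̄, P/(y_1, …, y_n)) = dim_K Tor_h^S(S/J, S/(x_1, …, x_n)); that is, the total Betti numbers of J̄ coincide with the total Betti numbers of the weighted ideal J = Φ(J̄)S. -/
open CategoryTheory MvPolynomial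

/-- The dimension over `K` of (the carrier of) a module `M` over a `K`-algebra `R`. -/
noncomputable def kdim (K R : Type) [Field K] [CommRing R] [Algebra K R]
    (M : ModuleCat R) : Cardinal :=
  @Module.rank K M _ _ (Module.compHom M (algebraMap K R))

/-- `dim_K Tor_h^T(T/N, T/𝔪_T)` for `T = K[x_1,…,x_n]` with irrelevant maximal ideal `𝔪_T`:
the `h`-th total Betti number of `T/N`. -/
noncomputable def totalBetti (K : Type) [Field K] (n : ℕ)
    (N : Ideal (MvPolynomial (Fin n) K)) (h : ℕ) : Cardinal :=
  kdim K (MvPolynomial (Fin n) K)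
    (((Tor (ModuleCat (MvPolynomial (Fin n) K)) h).obj
        (ModuleCat.of _ (MvPolynomial (Fin n) K ⧸ N))).obj
      (ModuleCat.of _ (MvPolynomial (Fin n) K ⧸
        Ideal.span (Set.range (X : Fin n → MvPolynomial (Fin n) K)))))

open MonoidalCategory TensorProduct

theorem Module.Projective.tower (R A M : Type*) [CommRing R] [CommRing A] [Algebra R A]
    [AddCommGroup M] [Module R M] [Module A M] [IsScalarTower R A M]
    [Module.Projective R A] [Module.Projective A M] : Module.Projective R M := by
  obtain ⟨s, hs⟩ := Module.projective_def'.mp (inferInstance : Module.Projective A M)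
  have : Module.Projective R (M →₀ A) := by
    classical exact Module.Projective.of_equiv (finsuppLequivDFinsupp R).symm
  refine Module.Projective.of_split (s.restrictScalars R)
    ((Finsupp.linearCombination A id).restrictScalars R) ?_
  exact LinearMap.ext fun x => LinearMap.congr_fun hs x

/-- Freeness of `S` over `P` from a multiplicative decomposition of a `K`-basis of `S`. -/
theorem Module.Free.of_basis_mul {K P S ι α β : Type*} [CommRing K] [CommRing P] [CommRing S]
    [Algebra K P] [Algebra K S] [Algebra P S] [IsScalarTower K P S]
    (bP : Module.Basis α K P) (bS : Module.Basis β K S) (c : ι → S) (ψ : ι × α ≃ β)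
    (h : ∀ i a, bP a • c i = bS (ψ (i, a))) : Module.Free P S := by
  let g : (ι →₀ P) →ₗ[P] S := Finsupp.linearCombination P c
  let e : (ι →₀ P) ≃ₗ[K] S :=
    (Finsupp.basis fun _ : ι => bP).equiv bS ((Equiv.sigmaEquivProd ι α).trans ψ)
  have hge : g.restrictScalars K = e.toLinearMap := by
    refine (Finsupp.basis fun _ : ι => bP).ext fun ⟨i, a⟩ => ?_
    rw [LinearEquiv.coe_coe, Module.Basis.equiv_apply]
    simp [g, h, Finsupp.coe_basis]
  have hg : Function.Bijective g := by
    have : (g : (ι →₀ P) → S) = e := funext fun x => LinearMap.congr_fun hge x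
    rw [this]
    exact e.bijective
  exact Module.Free.of_equiv (LinearEquiv.ofBijective g hg)

/-- Componentwise division with remainder of exponent vectors. -/
noncomputable def exponentDivModEquiv {n : ℕ} (ℓ : Fin n → ℕ) (hℓ : ∀ i, 0 < ℓ i) :
    (∀ i, Fin (ℓ i)) × (Fin n →₀ ℕ) ≃ (Fin n →₀ ℕ) where
  toFun p := Finsupp.equivFunOnFinite.symm fun i => p.1 i + ℓ i * p.2 i
  invFun d := (fun i => ⟨d i % ℓ i, Nat.mod_lt _ (hℓ i)⟩,
    Finsupp.equivFunOnFinite.symm fun i => d i / ℓ i)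
  left_inv p := by
    ext i
    · simp [Nat.mod_eq_of_lt]
    · simp [Nat.add_mul_div_left _ _ (hℓ i)]
  right_inv d := by
    ext i
    simp [Nat.mod_add_div]

/-- The `K`-algebra endomorphism `X i ↦ X i ^ ℓ i` makes the polynomial ring a free module over
itself. -/
theorem free_aeval_X_pow (K : Type) [Field K] {n : ℕ} (ℓ : Fin n → ℕ) (hℓ : ∀ i, 0 < ℓ i) :
    @Module.Free (MvPolynomial (Fin n) K) (MvPolynomial (Fin n) K) _ _
      (aeval (fun i : Fin n => (X i : MvPolynomial (Fin n) K) ^ ℓ i) :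
        MvPolynomial (Fin n) K →ₐ[K] MvPolynomial (Fin n) K).toRingHom.toAlgebra.toModule := by
  refine @Module.Free.of_basis_mul K (MvPolynomial (Fin n) K) (MvPolynomial (Fin n) K)
    (∀ i, Fin (ℓ i)) (Fin n →₀ ℕ) (Fin n →₀ ℕ) _ _ _ _ _
    (aeval (fun i : Fin n => (X i : MvPolynomial (Fin n) K) ^ ℓ i) :
        MvPolynomial (Fin n) K →ₐ[K] MvPolynomial (Fin n) K).toRingHom.toAlgebra
    (@IsScalarTower.of_algebraMap_eq' K (MvPolynomial (Fin n) K) (MvPolynomial (Fin n) K)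
      _ _ _ _ (aeval (fun i : Fin n => (X i : MvPolynomial (Fin n) K) ^ ℓ i) :
        MvPolynomial (Fin n) K →ₐ[K] MvPolynomial (Fin n) K).toRingHom.toAlgebra _
      (AlgHom.comp_algebraMap (aeval (fun i : Fin n => (X i : MvPolynomial (Fin n) K) ^ ℓ i) :
        MvPolynomial (Fin n) K →ₐ[K] MvPolynomial (Fin n) K)).symm)
    (basisMonomials (Fin n) K) (basisMonomials (Fin n) K)
    (fun r => monomial (Finsupp.equivFunOnFinite.symm fun i => (r i : ℕ)) 1)
    (exponentDivModEquiv ℓ hℓ) fun r q => ?_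
  change (aeval (fun i : Fin n => (X i : MvPolynomial (Fin n) K) ^ ℓ i) :
    MvPolynomial (Fin n) K →ₐ[K] MvPolynomial (Fin n) K) (basisMonomials (Fin n) K q) *
      monomial (Finsupp.equivFunOnFinite.symm fun i => (r i : ℕ)) 1 = _
  rw [coe_basisMonomials, aeval_monomial, monomial_eq]
  dsimp only
  rw [monomial_eq]
  simp [Finsupp.prod_fintype, exponentDivModEquiv, pow_add, pow_mul, Finset.prod_mul_distrib,
    mul_comm]

theorem kdim_eq_of_addEquiv {K R A : Type} [Field K] [CommRing R] [CommRing A] [Algebra K R]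
    [Algebra K A] {M : ModuleCat R} {N : ModuleCat A} (e : M ≃+ N)
    (h : ∀ (k : K) (x : M), e (algebraMap K R k • x) = algebraMap K A k • e x) :
    kdim K R M = kdim K A N := by
  let : Module K M := Module.compHom M (algebraMap K R)
  let : Module K N := Module.compHom N (algebraMap K A)
  exact LinearEquiv.rank_eq ({ e with map_smul' := h } : M ≃ₗ[K] N)

theorem kdim_eq_of_iso {K R : Type} [Field K] [CommRing R] [Algebra K R]
    {M N : ModuleCat R} (e : M ≅ N) : kdim K R M = kdim K R N :=
  kdim_eq_of_addEquiv e.toLinearEquiv.toAddEquiv fun k x =>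
    e.toLinearEquiv.map_smul (algebraMap K R k) x

/-- A semilinear additive equivalence, as an isomorphism onto the restriction of scalars. -/
def restrictScalarsIsoOfAddEquiv {R A : Type} [CommRing R] [CommRing A] (f : R →+* A)
    {M : ModuleCat.{0} R} {N : ModuleCat.{0} A} (e : M ≃+ N)
    (h : ∀ (r : R) (x : M), e (r • x) = f r • e x) :
    M ≅ (ModuleCat.restrictScalars.{0} f).obj N :=
  LinearEquiv.toModuleIso (X₂ := (ModuleCat.restrictScalars.{0} f).obj N)
    (@LinearEquiv.mk _ _ _ _ _ _ _ _ M ((ModuleCat.restrictScalars.{0} f).obj N) _ _ _ _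
      ⟨⟨e, e.map_add⟩, h⟩ e.symm e.left_inv e.right_inv)

section BaseChange

variable {R A : Type} [CommRing R] [CommRing A] [Algebra R A]

theorem isScalarTower_compHom (M : Type) [AddCommGroup M] [Module A M] :
    letI : Module R M := Module.compHom M (algebraMap R A)
    IsScalarTower R A M := by
  let : Module R M := Module.compHom M (algebraMap R A)
  exact ⟨fun r a m => by rw [Algebra.smul_def, mul_smul]; rfl⟩

instance restrictScalars_preservesProjectiveObjects [Module.Projective R A] :
    (ModuleCat.restrictScalars.{0} (algebraMap R A)).PreservesProjectiveObjects where
  projective_obj {M} hM := by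
    let : Module R M := Module.compHom M (algebraMap R A)
    have : IsScalarTower R A M := isScalarTower_compHom M
    have : Module.Projective A M := M.projective_of_module_projective
    exact (IsProjective.iff_projective (R := R) M).mp (Module.Projective.tower R A M)

/-- Tensoring an `A`-module `F` with `R ⧸ I` over `R` agrees with tensoring it with `A ⧸ IA`
over `A`. -/
noncomputable def quotTensorEquivQuotMapTensor (I : Ideal R) (F : Type) [AddCommGroup F]
    [Module R F] [Module A F] [IsScalarTower R A F] :
    (R ⧸ I) ⊗[R] F ≃+ (A ⧸ I.map (algebraMap R A)) ⊗[A] F :=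
  ((TensorProduct.quotTensorEquivQuotSMul F I).trans
    ((Submodule.quotEquivOfEq _ _
      (by rw [Ideal.smul_restrictScalars, Submodule.restrictScalars_top])).trans
    (Submodule.Quotient.restrictScalarsEquiv R
      (I.map (algebraMap R A) • (⊤ : Submodule A F))))).toAddEquiv.trans
  (TensorProduct.quotTensorEquivQuotSMul F (I.map (algebraMap R A))).symm.toAddEquiv

theorem quotTensorEquivQuotMapTensor_mk_tmul (I : Ideal R) (F : Type) [AddCommGroup F]
    [Module R F] [Module A F] [IsScalarTower R A F] (r : R) (x : F) :
    quotTensorEquivQuotMapTensor (A := A) I F (Ideal.Quotient.mk I r ⊗ₜ[R] x) =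
      1 ⊗ₜ[A] (r • x) := by
  simp only [quotTensorEquivQuotMapTensor, AddEquiv.trans_apply, LinearEquiv.coe_toAddEquiv,
    LinearEquiv.coe_addEquiv_apply, LinearEquiv.trans_apply,
    TensorProduct.quotTensorEquivQuotSMul_mk_tmul]
  rfl

theorem quotTensorEquivQuotMapTensor_smul (I : Ideal R) (F : Type) [AddCommGroup F]
    [Module R F] [Module A F] [IsScalarTower R A F] (r : R) (x : (R ⧸ I) ⊗[R] F) :
    quotTensorEquivQuotMapTensor (A := A) I F (r • x) =
      algebraMap R A r • quotTensorEquivQuotMapTensor I F x := by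
  induction x with
  | zero => simp
  | add x y hx hy => rw [smul_add, map_add, hx, hy, map_add, smul_add]
  | tmul b x =>
    obtain ⟨b, rfl⟩ := Ideal.Quotient.mk_surjective b
    rw [← TensorProduct.tmul_smul, quotTensorEquivQuotMapTensor_mk_tmul,
      quotTensorEquivQuotMapTensor_mk_tmul, ← TensorProduct.tmul_smul, algebraMap_smul,
      smul_comm]

/-- `quotTensorEquivQuotMapTensor`, as an isomorphism of `R`-modules natural in the
`A`-module. -/
noncomputable def quotTensorIsoQuotMapTensor (I : Ideal R) :
    ModuleCat.restrictScalars.{0} (algebraMap R A) ⋙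
        (tensoringLeft (ModuleCat R)).obj (ModuleCat.of R (R ⧸ I)) ≅
      (tensoringLeft (ModuleCat A)).obj (ModuleCat.of A (A ⧸ I.map (algebraMap R A))) ⋙
        ModuleCat.restrictScalars.{0} (algebraMap R A) :=
  NatIso.ofComponents (fun F =>
    letI : Module R F := Module.compHom F (algebraMap R A)
    haveI : IsScalarTower R A F := isScalarTower_compHom F
    restrictScalarsIsoOfAddEquiv (algebraMap R A)
      (M := ((tensoringLeft (ModuleCat R)).obj (ModuleCat.of R (R ⧸ I))).obj
        ((ModuleCat.restrictScalars.{0} (algebraMap R A)).obj F))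
      (N := ((tensoringLeft (ModuleCat A)).obj
        (ModuleCat.of A (A ⧸ I.map (algebraMap R A)))).obj F)
      (quotTensorEquivQuotMapTensor I F) (quotTensorEquivQuotMapTensor_smul I F))
    (fun {F G} f => by
      let : Module R F := Module.compHom F (algebraMap R A)
      have : IsScalarTower R A F := isScalarTower_compHom F
      let : Module R G := Module.compHom G (algebraMap R A)
      have : IsScalarTower R A G := isScalarTower_compHom G
      refine ModuleCat.hom_ext (LinearMap.ext fun z => ?_)
      change quotTensorEquivQuotMapTensor (A := A) I G
          ((f.hom.restrictScalars R).lTensor (R ⧸ I) z) =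
        f.hom.lTensor (A ⧸ I.map (algebraMap R A)) (quotTensorEquivQuotMapTensor I F z)
      change (R ⧸ I) ⊗[R] F at z
      induction z with
      | zero => simp
      | add x y hx hy => simp only [map_add, hx, hy]
      | tmul b x =>
        obtain ⟨b, rfl⟩ := Ideal.Quotient.mk_surjective b
        rw [LinearMap.lTensor_tmul, quotTensorEquivQuotMapTensor_mk_tmul,
          quotTensorEquivQuotMapTensor_mk_tmul, LinearMap.lTensor_tmul, ← map_smul]
        rfl)

theorem kdim_tor_quot_map {K : Type} [Field K] [Algebra K R] [Algebra K A] [IsScalarTower K R A]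
    [Module.Projective R A] (I : Ideal R) (N : ModuleCat.{0} A) (h : ℕ) :
    kdim K A (((Tor (ModuleCat A) h).obj
      (ModuleCat.of A (A ⧸ I.map (algebraMap R A)))).obj N) =
    kdim K R (((Tor (ModuleCat R) h).obj (ModuleCat.of R (R ⧸ I))).obj
      ((ModuleCat.restrictScalars.{0} (algebraMap R A)).obj N)) := by
  let Q := ProjectiveResolution.of N
  let ρ := ModuleCat.restrictScalars.{0} (algebraMap R A)
  let T := (tensoringLeft (ModuleCat A)).obj (ModuleCat.of A (A ⧸ I.map (algebraMap R A)))
  let T' := (tensoringLeft (ModuleCat R)).obj (ModuleCat.of R (R ⧸ I))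
  let C := (T.mapHomologicalComplex (ComplexShape.down ℕ)).obj Q.complex
  have e₁ : ((Tor (ModuleCat A) h).obj
      (ModuleCat.of A (A ⧸ I.map (algebraMap R A)))).obj N ≅ C.homology h :=
    Q.isoLeftDerivedObj T h
  have e₂ : ((Tor (ModuleCat R) h).obj (ModuleCat.of R (R ⧸ I))).obj (ρ.obj N) ≅
      ((T'.mapHomologicalComplex (ComplexShape.down ℕ)).obj
        ((ρ.mapHomologicalComplex (ComplexShape.down ℕ)).obj Q.complex)).homology h :=
    (ρ.mapProjectiveResolution Q).isoLeftDerivedObj T' h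
  have e₃ : (ρ.mapHomologicalComplex (ComplexShape.down ℕ)).obj C ≅
      (T'.mapHomologicalComplex (ComplexShape.down ℕ)).obj
        ((ρ.mapHomologicalComplex (ComplexShape.down ℕ)).obj Q.complex) :=
    (NatIso.mapHomologicalComplex (quotTensorIsoQuotMapTensor I)
      (ComplexShape.down ℕ)).symm.app Q.complex
  have e₄ : ((ρ.mapHomologicalComplex (ComplexShape.down ℕ)).obj C).homology h ≅
      ρ.obj (C.homology h) := (C.sc h).mapHomologyIso ρ
  rw [kdim_eq_of_iso e₁, kdim_eq_of_iso (e₂ ≪≫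
    ((HomologicalComplex.homologyFunctor _ _ h).mapIso e₃).symm ≪≫ e₄)]
  refine kdim_eq_of_addEquiv (N := ρ.obj (C.homology h)) (AddEquiv.refl _) fun k x => ?_
  rw [IsScalarTower.algebraMap_apply K R A]
  rfl

end BaseChange

/-- For a monomial ideal `J̄ ⊆ P = K[y_1,…,y_n]` and its extension
`J = Φ(J̄)S ⊆ S = K[x_1,…,x_n]` under the `K`-algebra map `Φ(y_i) = x_i^{ℓ_i}`, the total
Betti numbers of `J̄` and of the weighted ideal `J` coincide:
`dim_K Tor_h^P(P/J̄, P/𝔪) = dim_K Tor_h^S(S/J, S/𝔪)` for all `h`. -/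
theorem totalBetti_weighted_ideal_eq
    (K : Type) [Field K] [Infinite K] (n : ℕ) (hn : 2 ≤ n)
    (ℓ : Fin n → ℕ) (hℓ : ∀ i, 0 < ℓ i)
    (Jbar : Ideal (MvPolynomial (Fin n) K))
    (hmono : ∃ A : Set (Fin n →₀ ℕ),
      Jbar = Ideal.span ((fun d => (monomial d (1 : K) : MvPolynomial (Fin n) K)) '' A))
    (J : Ideal (MvPolynomial (Fin n) K))
    (hJ : J = Ideal.map
      (aeval (fun i : Fin n => (X i : MvPolynomial (Fin n) K) ^ ℓ i) :
        MvPolynomial (Fin n) K →ₐ[K] MvPolynomial (Fin n) K) Jbar) :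
    ∀ h : ℕ, totalBetti K n J h = totalBetti K n Jbar h := by
  subst hJ
  intro h
  let Φ : MvPolynomial (Fin n) K →ₐ[K] MvPolynomial (Fin n) K :=
    aeval fun i : Fin n => (X i : MvPolynomial (Fin n) K) ^ ℓ i
  let m : Ideal (MvPolynomial (Fin n) K) :=
    Ideal.span (Set.range (X : Fin n → MvPolynomial (Fin n) K))
  have hmem : ∀ p, Ideal.Quotient.mk m (Φ p) = Ideal.Quotient.mk m p := by
    intro p
    refine DFunLike.congr_fun (f := (Ideal.Quotient.mkₐ K m).comp Φ)
      (g := Ideal.Quotient.mkₐ K m) (algHom_ext fun i => ?_) p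
    have hX : Ideal.Quotient.mk m (X i) = 0 :=
      Ideal.Quotient.eq_zero_iff_mem.mpr (Ideal.subset_span ⟨i, rfl⟩)
    simp [Φ, hX, (hℓ i).ne']
  let N := ModuleCat.of (MvPolynomial (Fin n) K) (MvPolynomial (Fin n) K ⧸ m)
  let e : N ≅ (ModuleCat.restrictScalars.{0} Φ.toRingHom).obj N :=
    restrictScalarsIsoOfAddEquiv Φ.toRingHom (AddEquiv.refl N) fun p x => by
      obtain ⟨y, rfl⟩ := Ideal.Quotient.mk_surjective x
      change Ideal.Quotient.mk m (p * y) = Ideal.Quotient.mk m (Φ p * y)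
      rw [map_mul, map_mul, hmem]
  have key := @kdim_tor_quot_map (MvPolynomial (Fin n) K) (MvPolynomial (Fin n) K) _ _
    Φ.toRingHom.toAlgebra K _ _ _
    (@IsScalarTower.of_algebraMap_eq' K (MvPolynomial (Fin n) K) (MvPolynomial (Fin n) K)
      _ _ _ _ Φ.toRingHom.toAlgebra _ (AlgHom.comp_algebraMap Φ).symm)
    (@Module.Projective.of_free _ _ _ _ Φ.toRingHom.toAlgebra.toModule
      (free_aeval_X_pow K ℓ hℓ)) Jbar N h
  exact key.trans (kdim_eq_of_iso (((Tor _ h).obj _).mapIso e.symm))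
end

section
/- Let J̄ ⊆ P = K[y_1, …, y_n] be a monomial ideal and let J = Φ(J̄)S ⊆ S = K[x_1, …, x_n] be its extension under the K-algebra homomorphism Φ with Φ(y_i) = x_i^{ℓ_i}. Then the localization of S/J at the maximal ideal generated by the images of x_1, …, x_n is a Cohen–Macaulay local ring if and only if the localization of P/J̄ at the maximal ideal generated by the images of y_1, …, y_n is a Cohen–Macaulay local ring. -/
open MvPolynomial

/-- The depth of a Noetherian local ring: the supremum of the lengths of regular sequences
consisting of elements of the maximal ideal. -/
noncomputable def localDepth (T : Type) [CommRing T] [IsLocalRing T] : ℕ∞ :=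
  ⨆ rs : {l : List T // RingTheory.Sequence.IsRegular T l ∧
      ∀ r ∈ l, r ∈ IsLocalRing.maximalIdeal T}, (rs.1.length : ℕ∞)

/-- A local ring is Cohen–Macaulay if its depth equals its Krull dimension. -/
def IsCohenMacaulayLocal (T : Type) [CommRing T] [IsLocalRing T] : Prop :=
  (localDepth T : WithBot ℕ∞) = ringKrullDim T

open IsLocalRing RingTheory.Sequence TensorProduct

open CategoryTheory Abelian in
/-- Quotienting by a regular element drops the length of regular sequences by at most one. -/
lemma exists_isRegular_quotSMulTop {R M : Type} [CommRing R] [IsLocalRing R] [IsNoetherianRing R]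
    [AddCommGroup M] [Module R M] [Module.Finite R M] {x : R} (hx : x ∈ maximalIdeal R)
    (reg : IsSMulRegular M x) (n : ℕ)
    (h : ∃ l : List R, l.length = n + 1 ∧ (∀ r ∈ l, r ∈ maximalIdeal R) ∧ IsRegular M l) :
    ∃ l : List R, l.length = n ∧ (∀ r ∈ l, r ∈ maximalIdeal R) ∧ IsRegular (QuotSMulTop x M) l := by
  have : Nontrivial M := h.choose_spec.2.2.nontrivial
  have : Nontrivial (QuotSMulTop x M) := nontrivial_quotSMulTop_of_mem_maximalIdeal M hx
  have lt (N : Type) [AddCommGroup N] [Module R N] [Module.Finite R N] [Nontrivial N] :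
      maximalIdeal R • (⊤ : Submodule R N) < ⊤ :=
    (Submodule.top_ne_ideal_smul_of_le_jacobson_annihilator
      (maximalIdeal_le_jacobson _)).symm.lt_top
  have ext := ((ModuleCat.exists_isRegular_tfae (maximalIdeal R) (n + 1) (ModuleCat.of R M)
    (lt M)).out 1 3).mpr h
  refine ((ModuleCat.exists_isRegular_tfae (maximalIdeal R) n
    (ModuleCat.of R (QuotSMulTop x M)) (lt _)).out 1 3).mp fun i hi ↦ ?_
  have zero1 := AddCommGrpCat.isZero_of_iff_subsingleton.mpr (ext i (by omega))
  have zero2 := AddCommGrpCat.isZero_of_iff_subsingleton.mpr (ext (i + 1) (by omega))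
  exact AddCommGrpCat.subsingleton_of_isZero <| ShortComplex.Exact.isZero_of_both_zeros
    ((Ext.covariant_sequence_exact₃' _
      (IsSMulRegular.smulShortComplex_shortExact (M := ModuleCat.of R M) reg)) i (i + 1) rfl)
    (zero1.eq_zero_of_src _) (zero2.eq_zero_of_tgt _)

section FlatLocal

variable {A B : Type} [CommRing A] [CommRing B] [IsLocalRing A] [IsLocalRing B]
  [IsNoetherianRing A] [Algebra A B] [Module.FaithfullyFlat A B]

/-- Regular elements descend along flat local homomorphisms with zero-dimensional closed fibre. -/
lemma exists_isSMulRegular_of_tensorProduct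
    (hrad : maximalIdeal B ≤ ((maximalIdeal A).map (algebraMap A B)).radical)
    (M : Type) [AddCommGroup M] [Module A M] [Module.Finite A M] {y : B}
    (hy : y ∈ maximalIdeal B) (reg : IsSMulRegular (B ⊗[A] M) y) :
    ∃ x ∈ maximalIdeal A, IsSMulRegular M x := by
  by_contra! H
  have : ¬ Subsingleton ((A ⧸ maximalIdeal A) →ₗ[A] M) := fun hs ↦ by
    obtain ⟨r, hr, hr'⟩ := IsSMulRegular.subsingleton_linearMap_iff.mp hs
    exact H r (by simpa [Ideal.annihilator_quotient] using hr) hr'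
  rw [not_subsingleton_iff_nontrivial] at this
  obtain ⟨g, hg⟩ := exists_ne (0 : (A ⧸ maximalIdeal A) →ₗ[A] M)
  have hu : g 1 ≠ 0 := fun h0 ↦ hg <| by
    refine Submodule.linearMap_qext _ (LinearMap.ext_ring ?_)
    simpa using h0
  have hann (a : A) (ha : a ∈ maximalIdeal A) : a • g 1 = 0 := by
    rw [← map_smul, Algebra.smul_def, mul_one, Ideal.Quotient.algebraMap_eq,
      Ideal.Quotient.eq_zero_iff_mem.mpr ha, map_zero]
  have hle : (maximalIdeal A).map (algebraMap A B) ≤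
      (Submodule.span B {(1 : B) ⊗ₜ[A] g 1}).annihilator := by
    rw [Ideal.map_le_iff_le_comap]
    intro a ha
    rw [Ideal.mem_comap, Submodule.mem_annihilator_span_singleton, algebraMap_smul,
      ← TensorProduct.tmul_smul, hann a ha, TensorProduct.tmul_zero]
  obtain ⟨k, hk⟩ := hrad hy
  have h0 := (Submodule.mem_annihilator_span_singleton _ _).mp (hle hk)
  have : (1 : B) ⊗ₜ[A] g 1 = 0 := (reg.pow k) (by simpa using h0)
  rw [Module.FaithfullyFlat.one_tmul_eq_zero_iff] at this
  exact hu this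

/-- Lengths of regular sequences descend along flat local homomorphisms with zero-dimensional
closed fibre. -/
lemma exists_isRegular_of_tensorProduct [IsNoetherianRing B]
    (hrad : maximalIdeal B ≤ ((maximalIdeal A).map (algebraMap A B)).radical) (n : ℕ)
    (M : Type) [AddCommGroup M] [Module A M] [Module.Finite A M]
    (h : ∃ l : List B, l.length = n ∧ (∀ r ∈ l, r ∈ maximalIdeal B) ∧ IsRegular (B ⊗[A] M) l) :
    ∃ l : List A, l.length = n ∧ (∀ r ∈ l, r ∈ maximalIdeal A) ∧ IsRegular M l := by
  induction n generalizing M with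
  | zero =>
    have := h.choose_spec.2.2.nontrivial
    have : Nontrivial M := by
      by_contra hM
      rw [not_nontrivial_iff_subsingleton] at hM
      exact not_subsingleton (B ⊗[A] M) inferInstance
    exact ⟨[], rfl, by simp, IsRegular.nil _ _⟩
  | succ n ih =>
    obtain ⟨x, hx, hxM⟩ : ∃ x ∈ maximalIdeal A, IsSMulRegular M x := by
      obtain ⟨_ | ⟨y, l⟩, hlen, hmem, hreg⟩ := h
      · simp at hlen
      · exact exists_isSMulRegular_of_tensorProduct hrad M (hmem y List.mem_cons_self)
          ((isRegular_cons_iff _ _ _).mp hreg).1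
    have hxB : algebraMap A B x ∈ maximalIdeal B :=
      (map_mem_nonunits_iff (algebraMap A B) x).mpr hx
    have hxN : IsSMulRegular (B ⊗[A] M) (algebraMap A B x) := by
      rw [isSMulRegular_algebraMap_iff]
      exact hxM.lTensor B
    obtain ⟨l, hlen, hmem, hreg⟩ := exists_isRegular_quotSMulTop hxB hxN n h
    obtain ⟨l', hlen', hmem', hreg'⟩ := ih (QuotSMulTop x M) ⟨l, hlen, hmem,
      (LinearEquiv.isRegular_congr
        (QuotSMulTop.algebraMapTensorEquivTensorQuotSMulTop x M B) l).mp hreg⟩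
    exact ⟨x :: l', by simp [hlen'], by simpa using ⟨hx, hmem'⟩, hreg'.cons hxM⟩

/-- Depth is invariant under flat local homomorphisms with zero-dimensional closed fibre. -/
lemma localDepth_eq_of_faithfullyFlat [IsNoetherianRing B]
    (hrad : maximalIdeal B ≤ ((maximalIdeal A).map (algebraMap A B)).radical) :
    localDepth B = localDepth A := by
  refine le_antisymm (iSup_le fun ⟨l, hl, hmem⟩ ↦ ?_) (iSup_le fun ⟨l, hl, hmem⟩ ↦ ?_)
  · obtain ⟨l', hlen', hmem', hreg'⟩ := exists_isRegular_of_tensorProduct hrad l.length A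
      ⟨l, rfl, hmem, (LinearEquiv.isRegular_congr
        (AlgebraTensorModule.rid A B B) l).mpr hl⟩
    exact le_iSup_of_le ⟨l', hreg', hmem'⟩ (by simp [hlen'])
  · refine le_iSup_of_le ⟨l.map (algebraMap A B), hl.of_faithfullyFlat, ?_⟩ (by simp)
    simp only [List.mem_map, forall_exists_index, and_imp, forall_apply_eq_imp_iff₂]
    exact fun a ha ↦ (map_mem_nonunits_iff (algebraMap A B) a).mpr (hmem a ha)

/-- Krull dimension is invariant under flat local homomorphisms with zero-dimensional closed
fibre. -/
lemma ringKrullDim_eq_of_faithfullyFlat [IsNoetherianRing B]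
    (hrad : maximalIdeal B ≤ ((maximalIdeal A).map (algebraMap A B)).radical) :
    ringKrullDim B = ringKrullDim A := by
  set I := (maximalIdeal A).map (algebraMap A B)
  have hI : I ≤ maximalIdeal B := Ideal.map_le_iff_le_comap.mpr
    (maximalIdeal_comap (algebraMap A B)).ge
  have : (maximalIdeal B).LiesOver (maximalIdeal A) :=
    ⟨(maximalIdeal_comap (algebraMap A B)).symm⟩
  have h0 : ((maximalIdeal B).map (Ideal.Quotient.mk I)).height = 0 := by
    have hp : ((maximalIdeal B).map (Ideal.Quotient.mk I)).IsPrime :=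
      Ideal.map_isPrime_of_surjective Ideal.Quotient.mk_surjective (by simpa using hI)
    rw [Ideal.height_eq_zero_iff]
    refine ⟨⟨hp, bot_le⟩, fun q ⟨hq, _⟩ _ ↦ ?_⟩
    rw [Ideal.map_le_iff_le_comap]
    refine hrad.trans ((Ideal.IsPrime.comap (Ideal.Quotient.mk I)).radical_le_iff.mpr fun b hb ↦ ?_)
    rw [Ideal.mem_comap, Ideal.Quotient.eq_zero_iff_mem.mpr hb]
    exact q.zero_mem
  rw [← maximalIdeal_height_eq_ringKrullDim, ← maximalIdeal_height_eq_ringKrullDim,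
    Ideal.height_eq_height_add_of_liesOver_of_hasGoingDown (maximalIdeal A) (maximalIdeal B), h0,
    add_zero]

end FlatLocal

lemma isCohenMacaulayLocal_iff_of_flat {A B : Type} [CommRing A] [CommRing B] [IsLocalRing A]
    [IsLocalRing B] [IsNoetherianRing A] [IsNoetherianRing B] (f : A →+* B) [IsLocalHom f]
    (hf : f.Flat) (hrad : maximalIdeal B ≤ ((maximalIdeal A).map f).radical) :
    IsCohenMacaulayLocal B ↔ IsCohenMacaulayLocal A := by
  algebraize [f]
  have : IsLocalHom (algebraMap A B) := ‹IsLocalHom f›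
  have : Module.FaithfullyFlat A B := Module.FaithfullyFlat.of_flat_of_isLocalHom
  rw [IsCohenMacaulayLocal, IsCohenMacaulayLocal, localDepth_eq_of_faithfullyFlat hrad,
    ringKrullDim_eq_of_faithfullyFlat hrad]

lemma RingHom.Flat.quotientMap_of_eq_map {R S : Type} [CommRing R] [CommRing S] {f : R →+* S}
    (hf : f.Flat) {I : Ideal R} {J : Ideal S} (hJ : J = I.map f) (h : I ≤ J.comap f) :
    (Ideal.quotientMap J f h).Flat := by
  subst hJ
  algebraize [f]
  have : Module.Flat (R ⧸ I) (S ⧸ I.map (algebraMap R S)) := Module.Flat.of_linearEquiv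
    (Algebra.TensorProduct.quotIdealMapEquivQuotTensor S I).toLinearEquiv
  exact RingHom.flat_algebraMap_iff.mpr this

/-- If the translates of the image of a basis of `R` by a family in `S` form a basis of `S`, then
`S` is free, hence flat, over `R`. -/
lemma AlgHom.flat_of_basis {K R S ι κ τ : Type} [CommRing K] [CommRing R] [CommRing S]
    [Algebra K R] [Algebra K S] (φ : R →ₐ[K] S) (bR : Module.Basis ι K R)
    (bS : Module.Basis κ K S) (s : τ → S) (e : (Σ _ : τ, ι) ≃ κ)
    (h : ∀ t i, φ (bR i) * s t = bS (e ⟨t, i⟩)) : φ.toRingHom.Flat := by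
  algebraize [φ.toRingHom]
  have : IsScalarTower K R S := .of_algebraMap_eq fun x ↦ (φ.commutes x).symm
  let T : (τ →₀ R) →ₗ[R] S := Finsupp.linearCombination R s
  let E : (τ →₀ R) ≃ₗ[K] S := (Finsupp.basis fun _ : τ ↦ bR).equiv bS e
  have hTE : T.restrictScalars K = E.toLinearMap := by
    refine (Finsupp.basis fun _ : τ ↦ bR).ext fun ⟨t, i⟩ ↦ ?_
    simp only [E, T, LinearEquiv.coe_coe, Module.Basis.equiv_apply, ← h]
    simp [Algebra.smul_def, RingHom.algebraMap_toAlgebra]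
  have hT : Function.Bijective T := by
    have : ⇑T = ⇑E := congrArg DFunLike.coe hTE
    rw [this]
    exact E.bijective
  exact Module.Flat.of_linearEquiv (LinearEquiv.ofBijective T hT).symm

/-- The exponent of a monomial is uniquely `ℓ * d + r` with `r < ℓ` componentwise. -/
noncomputable def expandExponentEquiv {n : ℕ} (ℓ : Fin n → ℕ) (hℓ : ∀ i, 0 < ℓ i) :
    (Σ _ : (∀ i, Fin (ℓ i)), Fin n →₀ ℕ) ≃ (Fin n →₀ ℕ) where
  toFun p := Finsupp.equivFunOnFinite.symm fun i ↦ ℓ i * p.2 i + p.1 i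
  invFun e := ⟨fun i ↦ ⟨e i % ℓ i, Nat.mod_lt _ (hℓ i)⟩,
    Finsupp.equivFunOnFinite.symm fun i ↦ e i / ℓ i⟩
  left_inv p := by
    rcases p with ⟨r, d⟩
    have h1 : ∀ i, (ℓ i * d i + r i) % ℓ i = r i := fun i ↦ by
      rw [Nat.mul_add_mod, Nat.mod_eq_of_lt (r i).2]
    have h2 : ∀ i, (ℓ i * d i + r i) / ℓ i = d i := fun i ↦ by
      rw [Nat.mul_add_div (hℓ i), Nat.div_eq_of_lt (r i).2, add_zero]
    exact Sigma.ext (funext fun i ↦ Fin.ext (h1 i)) (heq_of_eq (Finsupp.ext h2))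
  right_inv e := by
    ext i
    exact Nat.div_add_mod _ _

lemma MvPolynomial.flat_aeval_X_pow (K : Type) [Field K] {n : ℕ} (ℓ : Fin n → ℕ)
    (hℓ : ∀ i, 0 < ℓ i) :
    (aeval (fun i : Fin n => (X i : MvPolynomial (Fin n) K) ^ ℓ i) :
        MvPolynomial (Fin n) K →ₐ[K] MvPolynomial (Fin n) K).toRingHom.Flat := by
  refine AlgHom.flat_of_basis _ (basisMonomials _ K) (basisMonomials _ K)
    (fun r : (∀ i, Fin (ℓ i)) ↦ ∏ i, X i ^ (r i : ℕ)) (expandExponentEquiv ℓ hℓ) fun r d ↦ ?_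
  simp only [coe_basisMonomials, aeval_monomial, map_one, one_mul]
  rw [monomial_eq, map_one, one_mul, Finsupp.prod_fintype _ _ (by simp),
    Finsupp.prod_fintype _ _ (by simp), ← Finset.prod_mul_distrib]
  refine Finset.prod_congr rfl fun i _ ↦ ?_
  rw [← pow_mul, ← pow_add]
  rfl

lemma MvPolynomial.isMaximal_span_range_X (K : Type) [Field K] (n : ℕ) :
    (Ideal.span (Set.range (X : Fin n → MvPolynomial (Fin n) K))).IsMaximal := by
  have : Ideal.span (Set.range (X : Fin n → MvPolynomial (Fin n) K)) =
      RingHom.ker (constantCoeff (R := K) (σ := Fin n)) := by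
    ext p
    rw [← Set.image_univ, mem_ideal_span_X_image, RingHom.mem_ker, constantCoeff_eq]
    refine ⟨fun h ↦ ?_, fun h m hm ↦ ?_⟩
    · by_contra h0
      obtain ⟨i, -, hi⟩ := h 0 (mem_support_iff.mpr h0)
      exact hi rfl
    · by_contra! H
      have : m = 0 := Finsupp.ext fun i ↦ H i (Set.mem_univ i)
      exact mem_support_iff.mp hm (this ▸ h)
  rw [this]
  exact RingHom.ker_isMaximal_of_surjective _ fun a ↦ ⟨C a, constantCoeff_C _ a⟩

/-- For a monomial ideal `J̄ ⊆ P = K[y_1,…,y_n]` and its extension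
`J = Φ(J̄)S` under the `K`-algebra map `Φ(y_i) = x_i^{ℓ_i}`, the localization of `S/J` at
the maximal ideal generated by the images of the variables is Cohen–Macaulay iff the
localization of `P/J̄` at the maximal ideal generated by the images of the variables is. -/
theorem weighted_ideal_cohenMacaulay_iff
    (K : Type) [Field K] [Infinite K] (n : ℕ) (hn : 2 ≤ n)
    (ℓ : Fin n → ℕ) (hℓ : ∀ i, 0 < ℓ i)
    (Jbar : Ideal (MvPolynomial (Fin n) K))
    (hmono : ∃ A : Set (Fin n →₀ ℕ),
      Jbar = Ideal.span ((fun d => (monomial d (1 : K) : MvPolynomial (Fin n) K)) '' A))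
    (J : Ideal (MvPolynomial (Fin n) K))
    (hJ : J = Ideal.map
      (aeval (fun i : Fin n => (X i : MvPolynomial (Fin n) K) ^ ℓ i) :
        MvPolynomial (Fin n) K →ₐ[K] MvPolynomial (Fin n) K) Jbar)
    [hm1 : (Ideal.map (Ideal.Quotient.mk J)
      (Ideal.span (Set.range (X : Fin n → MvPolynomial (Fin n) K)))).IsPrime]
    [hm2 : (Ideal.map (Ideal.Quotient.mk Jbar)
      (Ideal.span (Set.range (X : Fin n → MvPolynomial (Fin n) K)))).IsPrime] :
    IsCohenMacaulayLocal (Localization.AtPrime (Ideal.map (Ideal.Quotient.mk J)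
      (Ideal.span (Set.range (X : Fin n → MvPolynomial (Fin n) K))))) ↔
    IsCohenMacaulayLocal (Localization.AtPrime (Ideal.map (Ideal.Quotient.mk Jbar)
      (Ideal.span (Set.range (X : Fin n → MvPolynomial (Fin n) K))))) := by
  set m : Ideal (MvPolynomial (Fin n) K) :=
    Ideal.span (Set.range (X : Fin n → MvPolynomial (Fin n) K))
  set φ : MvPolynomial (Fin n) K →ₐ[K] MvPolynomial (Fin n) K :=
    aeval (fun i : Fin n => (X i : MvPolynomial (Fin n) K) ^ ℓ i)
  set p := m.map (Ideal.Quotient.mk J)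
  set q := m.map (Ideal.Quotient.mk Jbar)
  have hle : Jbar ≤ J.comap φ.toRingHom := hJ ▸ Ideal.le_comap_map
  let f := Ideal.quotientMap J φ.toRingHom hle
  have hf (i : Fin n) : f (Ideal.Quotient.mk Jbar (X i)) = Ideal.Quotient.mk J (X i) ^ ℓ i := by
    rw [Ideal.quotientMap_mk, ← map_pow]
    exact congrArg _ (aeval_X _ i)
  have hqp : q = p.comap f := by
    have : m.IsMaximal := isMaximal_span_range_X K n
    have : q.IsMaximal := (Ideal.map_eq_top_or_isMaximal_of_surjective _
      Ideal.Quotient.mk_surjective this).resolve_left hm2.ne_top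
    refine this.eq_of_le (hm1.comap f).ne_top ?_
    rw [Ideal.map_le_iff_le_comap, Ideal.span_le]
    rintro _ ⟨i, rfl⟩
    change f _ ∈ p
    rw [hf]
    exact Ideal.pow_mem_of_mem _
      (Ideal.mem_map_of_mem _ (Ideal.subset_span (Set.mem_range_self i))) _ (hℓ i)
  let g := Localization.localRingHom q p f hqp
  have : IsLocalHom g := Localization.isLocalHom_localRingHom q p f hqp
  refine isCohenMacaulayLocal_iff_of_flat g
    (((flat_aeval_X_pow K ℓ hℓ).quotientMap_of_eq_map hJ hle).localRingHom p q hqp) ?_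
  rw [← Localization.AtPrime.map_eq_maximalIdeal, Ideal.map_map, Ideal.map_le_iff_le_comap,
    Ideal.span_le]
  rintro _ ⟨i, rfl⟩
  refine ⟨ℓ i, ?_⟩
  rw [RingHom.comp_apply, ← map_pow, ← hf, ← Localization.localRingHom_to_map q p f hqp]
  refine Ideal.mem_map_of_mem g ?_
  rw [← Localization.AtPrime.map_eq_maximalIdeal]
  exact Ideal.mem_map_of_mem _ (Ideal.mem_map_of_mem _
    (Ideal.subset_span (Set.mem_range_self i)))
end

section
/- Let P = K[y_1, …, y_n] with n ≥ 2 and let I_{2,n} = (y_i y_j : 1 ≤ i < j ≤ n) be the ideal generated by all squarefree monomials of degree 2 (equivalently, I_{2,n} = ⋂_{k=1}^n (y_1, …, y_{k−1}, y_{k+1}, …, y_n), the ideal of the n coordinate points of ℙ^{n−1}). Then for every h with 0 ≤ h ≤ n−2, dim_K Tor_{h+1}^P(P/I_{2,n}, P/(y_1, …, y_n)) = (h+1)·C(n, h+2), and Tor_j^P(P/I_{2,n}, P/(y_1, …, y_n)) = 0 for all j ≥ n; i.e. the total Betti numbers of I_{2,n} coincide with those of the rational normal curve in ℙ^n. -/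
open CategoryTheory MvPolynomial

/-- `Tor_h^T(T/N, T/𝔪_T)` for `T = K[y_1,…,y_n]` with irrelevant maximal ideal `𝔪_T`. -/
noncomputable def torModule (K : Type) [Field K] (n : ℕ)
    (N : Ideal (MvPolynomial (Fin n) K)) (h : ℕ) : ModuleCat (MvPolynomial (Fin n) K) :=
  ((Tor (ModuleCat (MvPolynomial (Fin n) K)) h).obj
      (ModuleCat.of _ (MvPolynomial (Fin n) K ⧸ N))).obj
    (ModuleCat.of _ (MvPolynomial (Fin n) K ⧸
      Ideal.span (Set.range (X : Fin n → MvPolynomial (Fin n) K))))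

namespace Koszul

section Differential

variable {n : ℕ}

/-- The sign of moving `i` to its place in the increasing enumeration of `insert i A`. -/
def sgn (i : Fin n) (A : Finset (Fin n)) : ℤ := (-1) ^ (A.filter (· < i)).card

lemma sgn_mul_self (i : Fin n) (A : Finset (Fin n)) : sgn i A * sgn i A = 1 := by
  rw [sgn, ← mul_pow]; simp

lemma sgn_eq_one {i : Fin n} {A : Finset (Fin n)} (h : ∀ l ∈ A, i ≤ l) : sgn i A = 1 := by
  have : A.filter (· < i) = ∅ := Finset.filter_eq_empty_iff.2 fun l hl => not_lt.2 (h l hl)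
  simp [sgn, this]

lemma sgn_insert_of_lt {i k : Fin n} {A : Finset (Fin n)} (hk : k ∉ A) (h : k < i) :
    sgn i (insert k A) = -sgn i A := by
  rw [sgn, sgn, Finset.filter_insert, if_pos h, Finset.card_insert_of_notMem (by simp [hk]),
    pow_succ]
  simp

lemma sgn_insert_of_gt {i k : Fin n} (A : Finset (Fin n)) (h : i < k) :
    sgn i (insert k A) = sgn i A := by
  rw [sgn, sgn, Finset.filter_insert, if_neg h.not_gt]

lemma sgn_mul_sgn_insert {i k : Fin n} {A : Finset (Fin n)} (hi : i ∉ A) (hk : k ∉ A)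
    (h : i ≠ k) : sgn i A * sgn k (insert i A) = -(sgn k A * sgn i (insert k A)) := by
  rcases lt_or_gt_of_ne h with h | h
  · rw [sgn_insert_of_lt hi h, sgn_insert_of_gt A h]; ring
  · rw [sgn_insert_of_lt hk h, sgn_insert_of_gt A h]; ring

variable {R : Type*} [CommRing R] (x : Fin n → R) {M : Type*} [AddCommGroup M] [Module R M]

/-- The ungraded Koszul differential of the sequence `x` with coefficients in `M`. -/
def totalD : (Finset (Fin n) → M) →ₗ[R] (Finset (Fin n) → M) where
  toFun ω A := ∑ i ∈ Aᶜ, sgn i A • x i • ω (insert i A)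
  map_add' ω η := by ext A; simp [Finset.sum_add_distrib]
  map_smul' r ω := by
    ext A
    simp only [Pi.smul_apply, RingHom.id_apply, Finset.smul_sum]
    refine Finset.sum_congr rfl fun i _ => ?_
    rw [smul_comm (x i) r, smul_comm (sgn i A) r]

lemma totalD_apply (ω : Finset (Fin n) → M) (A : Finset (Fin n)) :
    totalD x ω A = ∑ i ∈ Aᶜ, sgn i A • x i • ω (insert i A) := rfl

lemma totalD_totalD (ω : Finset (Fin n) → M) : totalD x (totalD x ω) = 0 := by
  ext A
  simp only [totalD_apply, Pi.zero_apply, Finset.smul_sum]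
  rw [Finset.sum_sigma']
  refine Finset.sum_involution (fun p _ => ⟨p.2, p.1⟩) ?_ ?_ ?_ ?_
  · rintro ⟨i, k⟩ h
    simp only [Finset.mem_sigma, Finset.mem_compl, Finset.mem_insert, not_or] at h
    obtain ⟨hi, hki, hk⟩ := h
    dsimp only
    rw [smul_comm (x i), smul_comm (x k) (sgn i _), smul_smul, smul_smul (sgn k A),
      sgn_mul_sgn_insert hi hk (Ne.symm hki), Finset.insert_comm k i, smul_comm (x i) (x k),
      neg_smul, neg_add_cancel]
  · rintro ⟨i, k⟩ h _ he
    simp only [Finset.mem_sigma, Finset.mem_compl, Finset.mem_insert, not_or] at h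
    simp only [Sigma.mk.injEq, heq_eq_eq] at he
    exact h.2.1 he.1
  · rintro ⟨i, k⟩ h
    simp only [Finset.mem_sigma, Finset.mem_compl, Finset.mem_insert, not_or] at h ⊢
    exact ⟨h.2.2, fun he => h.2.1 he.symm, h.1⟩
  · rintro ⟨i, k⟩ _
    rfl

/-- The index set of the `j`-th Koszul module. -/
abbrev Idx (n j : ℕ) : Type := {A : Finset (Fin n) // A.card = j}

variable (R M) in
/-- Extension by zero of a family indexed by the subsets of size `j`. -/
def extend (j : ℕ) : (Idx n j → M) →ₗ[R] (Finset (Fin n) → M) where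
  toFun ω A := if h : A.card = j then ω ⟨A, h⟩ else 0
  map_add' ω η := by ext A; by_cases h : A.card = j <;> simp [h]
  map_smul' r ω := by ext A; by_cases h : A.card = j <;> simp [h]

@[simp]
lemma extend_coe {j : ℕ} (ω : Idx n j → M) (A : Idx n j) : extend R M j ω A = ω A := by
  simp [extend, A.2]

lemma extend_of_card_eq {j : ℕ} (ω : Idx n j → M) {A : Finset (Fin n)} (h : A.card = j) :
    extend R M j ω A = ω ⟨A, h⟩ := by
  simp [extend, h]

lemma extend_of_card_ne {j : ℕ} (ω : Idx n j → M) {A : Finset (Fin n)} (h : A.card ≠ j) :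
    extend R M j ω A = 0 := by
  simp [extend, h]

/-- The Koszul differential from degree `j + 1` to degree `j`. -/
def d (j : ℕ) : (Idx n (j + 1) → M) →ₗ[R] (Idx n j → M) :=
  (LinearMap.funLeft R M (Subtype.val : Idx n j → Finset (Fin n))) ∘ₗ totalD x ∘ₗ
    extend R M (j + 1)

lemma d_apply {j : ℕ} (ω : Idx n (j + 1) → M) (A : Idx n j) :
    d x j ω A = totalD x (extend R M (j + 1) ω) A := rfl

lemma extend_d {j : ℕ} (ω : Idx n (j + 1) → M) :
    extend R M j (d x j ω) = totalD x (extend R M (j + 1) ω) := by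
  ext A
  by_cases h : A.card = j
  · rw [extend_of_card_eq _ h]; rfl
  · rw [extend_of_card_ne _ h, totalD_apply]
    refine (Finset.sum_eq_zero fun i hi => ?_).symm
    rw [extend_of_card_ne, smul_zero, smul_zero]
    rw [Finset.card_insert_of_notMem (Finset.mem_compl.1 hi)]
    simpa using h

lemma d_d {j : ℕ} (ω : Idx n (j + 2) → M) : d x j (d x (j + 1) ω) = 0 := by
  ext A
  rw [d_apply, extend_d, totalD_totalD]
  rfl

end Differential

section Homotopy

variable {n : ℕ} {k : Type*} [CommRing k]

/-- The part of `p` not involving the variables before `X m`. -/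
noncomputable def truncate (m : Fin n) (p : MvPolynomial (Fin n) k) : MvPolynomial (Fin n) k :=
  ∑ b ∈ p.support with ∀ l < m, b l = 0, monomial b (coeff b p)

lemma coeff_truncate (m : Fin n) (p : MvPolynomial (Fin n) k) (b : Fin n →₀ ℕ) :
    coeff b (truncate m p) = if ∀ l < m, b l = 0 then coeff b p else 0 := by
  classical
  rw [truncate, coeff_sum]
  simp only [coeff_monomial, Finset.sum_ite_eq', Finset.mem_filter, mem_support_iff]
  by_cases h : coeff b p = 0 <;> simp [h]

/-- The contracting homotopy of the Koszul complex of the variables. -/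
noncomputable def homotopy (ω : Finset (Fin n) → MvPolynomial (Fin n) k) (B : Finset (Fin n)) :
    MvPolynomial (Fin n) k :=
  if h : B.Nonempty then
    truncate (B.min' h) ((ω (B.erase (B.min' h))).divMonomial (Finsupp.single (B.min' h) 1))
  else 0

lemma coeff_homotopy (ω : Finset (Fin n) → MvPolynomial (Fin n) k) {B : Finset (Fin n)}
    {m : Fin n} (hm : m ∈ B) (hB : ∀ l ∈ B, m ≤ l) (b : Fin n →₀ ℕ) :
    coeff b (homotopy ω B) =
      if ∀ l < m, b l = 0 then coeff (Finsupp.single m 1 + b) (ω (B.erase m)) else 0 := by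
  have h : B.Nonempty := ⟨m, hm⟩
  have : B.min' h = m := le_antisymm (B.min'_le m hm) (hB _ (B.min'_mem h))
  rw [homotopy, dif_pos h, coeff_truncate, coeff_divMonomial, this]

lemma coeff_totalD (ω : Finset (Fin n) → MvPolynomial (Fin n) k) (A : Finset (Fin n))
    (a : Fin n →₀ ℕ) :
    coeff a (totalD (R := MvPolynomial (Fin n) k) X ω A) = ∑ i ∈ Aᶜ, sgn i A •
      (if i ∈ a.support then coeff (a - Finsupp.single i 1) (ω (insert i A)) else 0) := by
  rw [totalD_apply, coeff_sum]
  refine Finset.sum_congr rfl fun i _ => ?_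
  rw [← coeff_X_mul', ← coeffAddMonoidHom_apply, map_zsmul]
  rfl

lemma totalD_homotopy (ω : Finset (Fin n) → MvPolynomial (Fin n) k)
    (hω : totalD (R := MvPolynomial (Fin n) k) X ω = 0) (h₀ : constantCoeff (ω ∅) = 0) :
    totalD (R := MvPolynomial (Fin n) k) X (homotopy ω) = ω := by
  ext A a
  rw [coeff_totalD]
  by_cases hS : (A ∪ a.support).Nonempty
  swap
  · rw [Finset.not_nonempty_iff_eq_empty, Finset.union_eq_empty, Finsupp.support_eq_empty] at hS
    obtain ⟨rfl, rfl⟩ := hS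
    simpa [constantCoeff_eq] using h₀.symm
  obtain ⟨m, hmS, hm⟩ : ∃ m ∈ A ∪ a.support, ∀ l ∈ A ∪ a.support, m ≤ l :=
    ⟨_, Finset.min'_mem _ hS, fun l hl => Finset.min'_le _ l hl⟩
  have hA : ∀ l ∈ A, m ≤ l := fun l hl => hm l (Finset.mem_union_left _ hl)
  have ha : ∀ l < m, a l = 0 := fun l hl => by
    by_contra h
    exact hl.not_ge (hm l (Finset.mem_union_right _ (Finsupp.mem_support_iff.2 h)))
  by_cases hmA : m ∈ A
  · have key := congrArg (coeff (a + Finsupp.single m 1)) (congrFun hω (A.erase m))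
    rw [coeff_totalD, Finset.compl_erase, Finset.sum_insert (by simpa using hmA),
      sgn_eq_one (fun l hl => hA l (Finset.mem_of_mem_erase hl)), if_pos (by simp),
      add_tsub_cancel_right, Finset.insert_erase hmA, one_smul] at key
    rw [eq_neg_of_add_eq_zero_left (key.trans (by simp)), ← Finset.sum_neg_distrib]
    refine Finset.sum_congr rfl fun i hi => ?_
    have hiA := Finset.mem_compl.1 hi
    have him : i ≠ m := fun h => hiA (h ▸ hmA)
    have hsupp : i ∈ (a + Finsupp.single m 1).support ↔ i ∈ a.support := by
      simp [him]
    by_cases hia : i ∈ a.support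
    swap
    · rw [if_neg hia, if_neg (by rwa [hsupp])]; simp
    rw [if_pos hia, if_pos (hsupp.2 hia)]
    have hmi : m < i := lt_of_le_of_ne (hm i (Finset.mem_union_right _ hia)) him.symm
    rw [coeff_homotopy ω (m := m) (Finset.mem_insert_of_mem hmA), if_pos,
      Finset.erase_insert_of_ne him]
    · conv_lhs => rw [← Finset.insert_erase hmA]
      rw [sgn_insert_of_lt (Finset.notMem_erase m A) hmi, neg_smul, Finset.insert_erase hmA]
      congr 4
      rw [add_comm a, add_tsub_assoc_of_le]
      rw [Finsupp.single_le_iff]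
      exact Nat.one_le_iff_ne_zero.2 (Finsupp.mem_support_iff.1 hia)
    · intro l hl
      simp [ha l hl]
    · intro l hl
      rcases Finset.mem_insert.1 hl with rfl | hl
      exacts [hmi.le, hA l hl]
  · have hma : m ∈ a.support := (Finset.mem_union.1 hmS).resolve_left hmA
    rw [Finset.sum_eq_single_of_mem m (Finset.mem_compl.2 hmA), if_pos hma, sgn_eq_one hA,
      one_smul, coeff_homotopy ω (Finset.mem_insert_self m A), if_pos, Finset.erase_insert hmA,
      add_tsub_cancel_of_le]
    · rw [Finsupp.single_le_iff]
      exact Nat.one_le_iff_ne_zero.2 (Finsupp.mem_support_iff.1 hma)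
    · intro l hl
      simp [ha l hl]
    · intro l hl
      rcases Finset.mem_insert.1 hl with rfl | hl
      exacts [le_rfl, hA l hl]
    · intro i hi him
      split_ifs with hia
      swap
      · simp
      obtain ⟨m', hm', hmin⟩ : ∃ m' ∈ insert i A, ∀ l ∈ insert i A, m' ≤ l :=
        ⟨_, Finset.min'_mem _ ⟨i, Finset.mem_insert_self i A⟩, fun l hl => Finset.min'_le _ l hl⟩
      rw [coeff_homotopy ω hm' hmin, if_neg, smul_zero]
      intro h
      have hlt : m < m' := by
        rcases Finset.mem_insert.1 hm' with rfl | h'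
        · exact lt_of_le_of_ne (hm _ (Finset.mem_union_right _ hia)) him.symm
        · exact lt_of_le_of_ne (hA _ h') fun h => hmA (h ▸ h')
      have := h m hlt
      simp [him] at this
      exact Finsupp.mem_support_iff.1 hma this

lemma homotopy_eq_zero_of_card_ne {j : ℕ} (ω : Idx n j → MvPolynomial (Fin n) k) {B : Finset (Fin n)}
    (hB : B.card ≠ j + 1) :
    homotopy (extend (MvPolynomial (Fin n) k) (MvPolynomial (Fin n) k) j ω) B = 0 := by
  by_cases h : B.Nonempty
  swap
  · rw [homotopy, dif_neg h]
  ext b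
  rw [coeff_homotopy _ (B.min'_mem h) (fun l hl => B.min'_le l hl), extend_of_card_ne]
  · simp
  · have := Finset.card_erase_add_one (B.min'_mem h)
    omega

lemma exists_d_eq {j : ℕ} (ω : Idx n j → MvPolynomial (Fin n) k)
    (hω : totalD (R := MvPolynomial (Fin n) k) X (extend (MvPolynomial (Fin n) k) (MvPolynomial (Fin n) k) j ω) = 0)
    (h₀ : constantCoeff (extend (MvPolynomial (Fin n) k) (MvPolynomial (Fin n) k) j ω ∅) = 0) :
    ∃ η : Idx n (j + 1) → MvPolynomial (Fin n) k, d (R := MvPolynomial (Fin n) k) X j η = ω := by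
  refine ⟨fun B => homotopy (extend (MvPolynomial (Fin n) k) _ j ω) B, ?_⟩
  have hext : extend (MvPolynomial (Fin n) k) (MvPolynomial (Fin n) k) (j + 1)
      (fun B => homotopy (extend (MvPolynomial (Fin n) k) _ j ω) B) =
      homotopy (extend (MvPolynomial (Fin n) k) _ j ω) := by
    ext1 B
    by_cases hB : B.card = j + 1
    · rw [extend_of_card_eq _ hB]
    · rw [extend_of_card_ne _ hB, homotopy_eq_zero_of_card_ne ω hB]
  ext1 A
  rw [d_apply, hext, totalD_homotopy _ hω h₀, extend_coe]

lemma exists_d_eq_of_d_eq_zero {j : ℕ} (ω : Idx n (j + 1) → MvPolynomial (Fin n) k)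
    (hω : d (R := MvPolynomial (Fin n) k) X j ω = 0) : ∃ η : Idx n (j + 2) → MvPolynomial (Fin n) k, d (R := MvPolynomial (Fin n) k) X (j + 1) η = ω := by
  refine exists_d_eq ω ?_ ?_
  · rw [← extend_d, hω, map_zero]
  · rw [extend_of_card_ne _ (by simp), map_zero]

lemma exists_d_zero_eq (ω : Idx n 0 → MvPolynomial (Fin n) k)
    (hω : constantCoeff (ω ⟨∅, rfl⟩) = 0) :
    ∃ η : Idx n 1 → MvPolynomial (Fin n) k, d (R := MvPolynomial (Fin n) k) X 0 η = ω := by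
  refine exists_d_eq ω ?_ ?_
  · ext1 A
    refine Finset.sum_eq_zero fun i _ => ?_
    rw [extend_of_card_ne _ (by simp), smul_zero, smul_zero]
  · rwa [extend_of_card_eq ω Finset.card_empty]

end Homotopy


section SquarefreeQuotient

variable {n : ℕ} {K : Type} [Field K]

/-- The ideal generated by the products of two distinct variables. -/
noncomputable abbrev pairIdeal (K : Type) [Field K] (n : ℕ) : Ideal (MvPolynomial (Fin n) K) :=
  Ideal.span {g : MvPolynomial (Fin n) K | ∃ i j : Fin n, i < j ∧ g = X i * X j}

lemma X_mul_X_mem_pairIdeal {i l : Fin n} (h : i ≠ l) :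
    (X i * X l : MvPolynomial (Fin n) K) ∈ pairIdeal K n := by
  rcases lt_or_gt_of_ne h with h | h
  · exact Ideal.subset_span ⟨i, l, h, rfl⟩
  · exact Ideal.subset_span ⟨l, i, h, mul_comm _ _⟩

lemma mem_pairIdeal_of_coeff {p : MvPolynomial (Fin n) K} (h0 : coeff 0 p = 0)
    (h : ∀ i k, coeff (Finsupp.single i k) p = 0) : p ∈ pairIdeal K n := by
  rw [p.as_sum]
  refine Ideal.sum_mem _ fun a ha => ?_
  have ha' := mem_support_iff.1 ha
  obtain ⟨i, hi⟩ : ∃ i, a i ≠ 0 := by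
    by_contra! hc
    exact ha' ((Finsupp.ext hc : a = 0) ▸ h0)
  obtain ⟨l, hl, hil⟩ : ∃ l, a l ≠ 0 ∧ i ≠ l := by
    by_contra! hc
    refine ha' ?_
    convert h i (a i)
    ext l
    by_cases hil : i = l
    · subst hil; simp
    · rw [Finsupp.single_eq_of_ne (Ne.symm hil)]
      by_contra hne
      exact hil (hc l hne)
  refine Ideal.mem_of_dvd _ ?_ (X_mul_X_mem_pairIdeal hil)
  rw [X, X, monomial_mul, monomial_dvd_monomial]
  refine ⟨Or.inr fun m => ?_, by simp⟩
  simp only [Finsupp.add_apply, Finsupp.single_apply]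
  have := Nat.pos_of_ne_zero hi
  have := Nat.pos_of_ne_zero hl
  split_ifs with h1 h2 h2
  · exact absurd (h1.trans h2.symm) hil
  · subst h1; omega
  · subst h2; omega
  · omega

/-- Restriction to the `i`-th coordinate axis. -/
noncomputable def axisEval (i : Fin n) : MvPolynomial (Fin n) K →ₐ[K] Polynomial K :=
  aeval (Pi.single i Polynomial.X)

lemma axisEval_X (i l : Fin n) :
    axisEval (K := K) i (X l) = if l = i then Polynomial.X else 0 := by
  rw [axisEval, aeval_X, Pi.single_apply]

lemma coeff_axisEval (i : Fin n) (p : MvPolynomial (Fin n) K) (k : ℕ) :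
    (axisEval i p).coeff k = coeff (Finsupp.single i k) p := by
  induction p using MvPolynomial.induction_on' with
  | add p q hp hq => simp [hp, hq]
  | monomial a c =>
    rw [axisEval, aeval_monomial, coeff_monomial, Polynomial.algebraMap_eq,
      Polynomial.coeff_C_mul]
    by_cases h : ∃ l, l ≠ i ∧ a l ≠ 0
    · obtain ⟨l, hli, hl⟩ := h
      rw [if_neg, Finsupp.prod, Finset.prod_eq_zero (Finsupp.mem_support_iff.2 hl)]
      · simp
      · simp [hli, hl]
      · rintro rfl
        exact hl (by simp [hli])
    · push Not at h
      have ha : a = Finsupp.single i (a i) := by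
        ext l
        by_cases hl : l = i
        · subst hl; simp
        · rw [h l hl, Finsupp.single_eq_of_ne hl]
      generalize a i = e at ha
      subst ha
      rw [Finsupp.prod_single_index (by simp), Pi.single_eq_same, Polynomial.coeff_X_pow]
      by_cases hk : k = e
      · simp [hk]
      · rw [if_neg hk, if_neg, mul_zero]
        intro he
        exact hk (by simpa using (congrFun (congrArg DFunLike.coe he) i).symm)

/-- Restriction of the coordinate ring of the union of the axes to the `i`-th axis. -/
noncomputable def toAxis (i : Fin n) :
    (MvPolynomial (Fin n) K ⧸ pairIdeal K n) →ₐ[K] Polynomial K :=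
  Ideal.Quotient.liftₐ (pairIdeal K n) (axisEval i) fun a ha => by
    change a ∈ RingHom.ker (axisEval (K := K) i)
    refine (Ideal.span_le.2 ?_ : pairIdeal K n ≤ _) ha
    rintro _ ⟨l, m, hlm, rfl⟩
    rw [SetLike.mem_coe, RingHom.mem_ker, map_mul, axisEval_X, axisEval_X]
    split_ifs with h1 h2
    · exact absurd (h1.trans h2.symm) hlm.ne
    all_goals simp

lemma toAxis_mk (i : Fin n) (p : MvPolynomial (Fin n) K) :
    toAxis i (Ideal.Quotient.mk (pairIdeal K n) p) = axisEval i p := rfl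

lemma toAxis_X_smul (i l : Fin n) (m : MvPolynomial (Fin n) K ⧸ pairIdeal K n) :
    toAxis i ((X l : MvPolynomial (Fin n) K) • m) =
      if l = i then Polynomial.X * toAxis i m else 0 := by
  obtain ⟨p, rfl⟩ := Ideal.Quotient.mk_surjective m
  change axisEval i (X l * p) = if l = i then Polynomial.X * axisEval i p else 0
  rw [map_mul, axisEval_X, ite_mul, zero_mul]

lemma coeff_zero_toAxis (i l : Fin n) (m : MvPolynomial (Fin n) K ⧸ pairIdeal K n) :
    (toAxis i m).coeff 0 = (toAxis l m).coeff 0 := by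
  obtain ⟨p, rfl⟩ := Ideal.Quotient.mk_surjective m
  simp [toAxis_mk, coeff_axisEval]

lemma eq_of_toAxis_eq [NeZero n] {m m' : MvPolynomial (Fin n) K ⧸ pairIdeal K n}
    (h : ∀ i, toAxis i m = toAxis i m') : m = m' := by
  obtain ⟨p, rfl⟩ := Ideal.Quotient.mk_surjective m
  obtain ⟨q, rfl⟩ := Ideal.Quotient.mk_surjective m'
  have hc : ∀ i k, coeff (Finsupp.single i k) (p - q) = 0 := fun i k => by
    rw [← coeff_axisEval, map_sub, ← toAxis_mk, ← toAxis_mk, h i, sub_self,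
      Polynomial.coeff_zero]
  refine Ideal.Quotient.eq.2 (mem_pairIdeal_of_coeff ?_ hc)
  simpa using hc 0 0

lemma exists_toAxis_eq (c : K) (f : Fin n → Polynomial K) (hf : ∀ i, (f i).coeff 0 = c) :
    ∃ m : MvPolynomial (Fin n) K ⧸ pairIdeal K n, ∀ i, toAxis i m = f i := by
  refine ⟨Ideal.Quotient.mk _ (C c +
    ∑ l, Polynomial.aeval (X l : MvPolynomial (Fin n) K) (f l - Polynomial.C c)), fun i => ?_⟩
  rw [toAxis_mk, map_add, map_sum, Finset.sum_eq_single_of_mem i (Finset.mem_univ i)]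
  · rw [← Polynomial.aeval_algHom_apply, axisEval_X, if_pos rfl, Polynomial.aeval_X_left_apply,
      ← MvPolynomial.algebraMap_eq, AlgHom.commutes, Polynomial.algebraMap_eq]
    ring
  · intro l _ hl
    rw [← Polynomial.aeval_algHom_apply, axisEval_X, if_neg hl]
    simp [← Polynomial.coeff_zero_eq_aeval_zero', hf]

/-- The coordinate ring of the union of the coordinate axes of `𝔸ⁿ`. -/
local notation "𝐑" => MvPolynomial (Fin n) K ⧸ pairIdeal K n

lemma toAxis_totalD (ω : Finset (Fin n) → 𝐑) (A : Finset (Fin n)) (i : Fin n) :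
    toAxis i (totalD (R := MvPolynomial (Fin n) K) X ω A) =
      if i ∈ A then 0 else sgn i A • (Polynomial.X * toAxis i (ω (insert i A))) := by
  rw [totalD_apply, map_sum]
  simp only [map_zsmul, toAxis_X_smul]
  simp

/-- The `i`-th coordinate in the squarefree multidegree `C` of a Koszul chain. -/
noncomputable def linearCoord (C : Finset (Fin n)) (i : Fin n) :
    (Finset (Fin n) → 𝐑) →ₗ[K] K where
  toFun ω := sgn i (C.erase i) • (toAxis i (ω (C.erase i))).coeff 1
  map_add' ω η := by simp
  map_smul' r ω := by simp [mul_left_comm]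

lemma linearCoord_apply (C : Finset (Fin n)) (i : Fin n) (ω : Finset (Fin n) → 𝐑) :
    linearCoord C i ω = sgn i (C.erase i) • (toAxis i (ω (C.erase i))).coeff 1 := rfl

lemma linearCoord_totalD {C : Finset (Fin n)} {i : Fin n} (hi : i ∈ C)
    (ω : Finset (Fin n) → 𝐑) :
    linearCoord C i (totalD (R := MvPolynomial (Fin n) K) X ω) = (toAxis i (ω C)).coeff 0 := by
  rw [linearCoord_apply, toAxis_totalD, if_neg (Finset.notMem_erase i C), Finset.insert_erase hi,
    Polynomial.coeff_smul, smul_smul, sgn_mul_self, one_smul, Polynomial.coeff_X_mul]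

lemma totalD_eq_zero_iff [NeZero n] (ω : Finset (Fin n) → 𝐑) :
    totalD (R := MvPolynomial (Fin n) K) X ω = 0 ↔ ∀ A, ∀ i ∈ A, toAxis i (ω A) = 0 := by
  constructor
  · intro h A i hi
    have := toAxis_totalD ω (A.erase i) i
    rw [h, if_neg (Finset.notMem_erase i A), Finset.insert_erase hi, Pi.zero_apply, map_zero,
      eq_comm] at this
    have h' := congrArg (sgn i (A.erase i) • ·) this
    rw [smul_smul, sgn_mul_self, one_smul, smul_zero] at h'
    exact (mul_eq_zero.1 h').resolve_left Polynomial.X_ne_zero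
  · intro h
    ext1 A
    refine eq_of_toAxis_eq fun i => ?_
    rw [toAxis_totalD, h _ i (Finset.mem_insert_self i A)]
    simp

lemma exists_totalD_eq [NeZero n] (ω : Finset (Fin n) → 𝐑)
    (hω : ∀ A, ∀ i ∈ A, toAxis i (ω A) = 0) (h₀ : ω ∅ = 0)
    (hlin : ∀ C, ∀ i ∈ C, ∀ l ∈ C, linearCoord C i ω = linearCoord C l ω) :
    ∃ η : Finset (Fin n) → 𝐑, totalD (R := MvPolynomial (Fin n) K) X η = ω := by
  have key (C : Finset (Fin n)) : ∃ m : 𝐑, ∀ i ∈ C,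
      toAxis i m = sgn i (C.erase i) • (toAxis i (ω (C.erase i))).divX := by
    by_cases hC : C.Nonempty
    swap
    · exact ⟨0, fun i hi => absurd ⟨i, hi⟩ hC⟩
    obtain ⟨l, hl⟩ := hC
    obtain ⟨m, hm⟩ := exists_toAxis_eq (n := n) (linearCoord C l ω)
      (fun i => if i ∈ C then sgn i (C.erase i) • (toAxis i (ω (C.erase i))).divX
        else Polynomial.C (linearCoord C l ω)) (fun i => by
          split_ifs with hi
          · rw [← hlin C i hi l hl, linearCoord_apply, Polynomial.coeff_smul,
              Polynomial.coeff_divX]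
          · simp)
    exact ⟨m, fun i hi => by rw [hm, if_pos hi]⟩
  choose η hη using key
  refine ⟨η, funext fun A => eq_of_toAxis_eq fun i => ?_⟩
  rw [toAxis_totalD]
  split_ifs with hi
  · exact (hω A i hi).symm
  · rw [hη _ i (Finset.mem_insert_self i A), Finset.erase_insert hi, mul_smul_comm, smul_smul,
      sgn_mul_self, one_smul]
    have h0 : (toAxis i (ω A)).coeff 0 = 0 := by
      rcases A.eq_empty_or_nonempty with rfl | ⟨l, hl⟩
      · simp [h₀]
      · rw [coeff_zero_toAxis i l, hω A l hl, Polynomial.coeff_zero]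
    conv_rhs => rw [← Polynomial.X_mul_divX_add (toAxis i (ω A)), h0]
    simp

/-- The squarefree part of a cycle, modulo boundaries. -/
noncomputable def cycleCoord (j : ℕ) :
    LinearMap.ker (d (R := MvPolynomial (Fin n) K) (M := 𝐑) X j) →ₗ[K]
      (Idx n (j + 2) → Fin (j + 1) → K) :=
  LinearMap.pi fun C => LinearMap.pi fun t =>
    (linearCoord C.1 (C.1.orderEmbOfFin C.2 t.succ) - linearCoord C.1 (C.1.orderEmbOfFin C.2 0)) ∘ₗ
      (extend (MvPolynomial (Fin n) K) 𝐑 (j + 1)).restrictScalars K ∘ₗ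
        (LinearMap.ker (d (R := MvPolynomial (Fin n) K) (M := 𝐑) X j)).subtype.restrictScalars K

lemma cycleCoord_apply (j : ℕ) (ω : LinearMap.ker (d (R := MvPolynomial (Fin n) K) (M := 𝐑) X j))
    (C : Idx n (j + 2)) (t : Fin (j + 1)) :
    cycleCoord j ω C t =
      linearCoord C.1 (C.1.orderEmbOfFin C.2 t.succ) (extend (MvPolynomial (Fin n) K) 𝐑 _ ω.1) -
      linearCoord C.1 (C.1.orderEmbOfFin C.2 0) (extend (MvPolynomial (Fin n) K) 𝐑 _ ω.1) := rfl

lemma mem_ker_d_iff [NeZero n] {j : ℕ} (ω : Idx n (j + 1) → 𝐑) :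
    ω ∈ LinearMap.ker (d (R := MvPolynomial (Fin n) K) (M := 𝐑) X j) ↔
      ∀ A, ∀ i ∈ A, toAxis i (extend (MvPolynomial (Fin n) K) 𝐑 (j + 1) ω A) = 0 := by
  rw [← totalD_eq_zero_iff, ← extend_d, LinearMap.mem_ker]
  constructor
  · intro h
    rw [h, map_zero]
  · intro h
    ext1 A
    rw [← extend_coe (R := MvPolynomial (Fin n) K) (d X j ω) A, h]
    rfl

lemma cycleCoord_eq_zero_iff [NeZero n] (j : ℕ)
    (ω : LinearMap.ker (d (R := MvPolynomial (Fin n) K) (M := 𝐑) X j)) :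
    cycleCoord j ω = 0 ↔
      ω.1 ∈ LinearMap.range (d (R := MvPolynomial (Fin n) K) (M := 𝐑) X (j + 1)) := by
  constructor
  · intro h
    obtain ⟨η, hη⟩ := exists_totalD_eq (extend (MvPolynomial (Fin n) K) 𝐑 (j + 1) ω.1)
      ((mem_ker_d_iff _).1 ω.2) (extend_of_card_ne _ (by simp)) (by
        intro C
        suffices H : ∀ i ∈ C, ∀ hC : C.card = j + 2,
            linearCoord C i (extend (MvPolynomial (Fin n) K) 𝐑 (j + 1) ω.1) =
            linearCoord C (C.orderEmbOfFin hC 0) (extend (MvPolynomial (Fin n) K) 𝐑 (j + 1) ω.1) by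
          intro i hi l hl
          by_cases hC : C.card = j + 2
          · rw [H i hi hC, H l hl hC]
          · have hz : ∀ i ∈ C, linearCoord C i
                (extend (MvPolynomial (Fin n) K) 𝐑 (j + 1) ω.1) = 0 := fun i hi => by
              rw [linearCoord_apply, extend_of_card_ne]
              · simp
              · have := Finset.card_erase_add_one hi
                omega
            rw [hz i hi, hz l hl]
        intro i hi hC
        obtain ⟨t, rfl⟩ : i ∈ Set.range (C.orderEmbOfFin hC) := by
          rwa [Finset.range_orderEmbOfFin]
        refine Fin.cases rfl (fun t => ?_) t
        exact sub_eq_zero.1 (congrFun (congrFun h ⟨C, hC⟩) t))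
    refine ⟨fun C => η C, ?_⟩
    ext1 A
    rw [d_apply, ← extend_coe (R := MvPolynomial (Fin n) K) ω.1 A, ← hη, totalD_apply, totalD_apply]
    refine Finset.sum_congr rfl fun i hi => ?_
    rw [extend_of_card_eq]
    rw [Finset.card_insert_of_notMem (Finset.mem_compl.1 hi), A.2]
  · rintro ⟨η, hη⟩
    ext C t
    rw [cycleCoord_apply, ← hη, extend_d, linearCoord_totalD (Finset.orderEmbOfFin_mem _ _ _),
      linearCoord_totalD (Finset.orderEmbOfFin_mem _ _ _), coeff_zero_toAxis, sub_self]
    rfl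

lemma cycleCoord_surjective [NeZero n] (j : ℕ) :
    Function.Surjective (cycleCoord (K := K) (n := n) j) := by
  intro w
  let v (C : Finset (Fin n)) (i : Fin n) : K :=
    if hC : C.card = j + 2 then
      ∑ t, if C.orderEmbOfFin hC (Fin.succ t) = i then w ⟨C, hC⟩ t else 0
    else 0
  have key (A : Idx n (j + 1)) : ∃ m : 𝐑, ∀ i, toAxis i m =
      if i ∈ A.1 then 0 else Polynomial.C (sgn i A.1 • v (insert i A.1) i) * Polynomial.X :=
    exists_toAxis_eq 0 _ fun i => by split_ifs <;> simp
  choose ω hω using key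
  have hker : ω ∈ LinearMap.ker (d (R := MvPolynomial (Fin n) K) (M := 𝐑) X j) := by
    refine (mem_ker_d_iff ω).2 fun A i hi => ?_
    by_cases hA : A.card = j + 1
    · rw [extend_of_card_eq _ hA, hω, if_pos hi]
    · rw [extend_of_card_ne _ hA, map_zero]
  have hlin (C : Idx n (j + 2)) (i : Fin n) (hi : i ∈ C.1) :
      linearCoord C.1 i (extend (MvPolynomial (Fin n) K) 𝐑 (j + 1) ω) = v C.1 i := by
    have hcard : (C.1.erase i).card = j + 1 := by
      have := Finset.card_erase_add_one hi
      have := C.2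
      omega
    rw [linearCoord_apply, extend_of_card_eq _ hcard, hω, if_neg (Finset.notMem_erase i C.1),
      Polynomial.coeff_C_mul, Polynomial.coeff_X_one, mul_one, smul_smul, sgn_mul_self, one_smul,
      Finset.insert_erase hi]
  refine ⟨⟨ω, hker⟩, ?_⟩
  ext C t
  rw [cycleCoord_apply, hlin C _ (Finset.orderEmbOfFin_mem _ _ _),
    hlin C _ (Finset.orderEmbOfFin_mem _ _ _)]
  simp only [v, dif_pos C.2, EmbeddingLike.apply_eq_iff_eq, Fin.succ_inj, Fin.succ_ne_zero]
  simp

end SquarefreeQuotient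

section Resolution

variable {n : ℕ} {K : Type} [Field K]

variable (n K) in
/-- The Koszul complex of the variables of `K[y₁, …, yₙ]`. -/
noncomputable def koszulComplex : ChainComplex (ModuleCat (MvPolynomial (Fin n) K)) ℕ :=
  ChainComplex.of (fun j => ModuleCat.of _ (Idx n j → MvPolynomial (Fin n) K))
    (fun j => ModuleCat.ofHom (d (R := MvPolynomial (Fin n) K) X j))
    (fun j => by ext1; exact LinearMap.ext fun ω => d_d X ω)

lemma koszulComplex_d (j : ℕ) :
    (koszulComplex n K).d (j + 1) j =
      ModuleCat.ofHom (d (R := MvPolynomial (Fin n) K) (M := MvPolynomial (Fin n) K) X j) :=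
  ChainComplex.of_d (fun j => ModuleCat.of _ (Idx n j → MvPolynomial (Fin n) K))
    (fun j => ModuleCat.ofHom (d (R := MvPolynomial (Fin n) K) X j)) j

lemma koszulComplex_d_apply (j : ℕ) (ω : Idx n (j + 1) → MvPolynomial (Fin n) K) :
    (koszulComplex n K).d (j + 1) j ω = d (R := MvPolynomial (Fin n) K) X j ω := by
  rw [koszulComplex_d]
  rfl

/-- The ideal generated by the variables. -/
noncomputable abbrev varsIdeal (K : Type) [Field K] (n : ℕ) : Ideal (MvPolynomial (Fin n) K) :=
  Ideal.span (Set.range (X : Fin n → MvPolynomial (Fin n) K))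

lemma constantCoeff_eq_zero_of_mem {p : MvPolynomial (Fin n) K} (hp : p ∈ varsIdeal K n) :
    constantCoeff p = 0 := by
  refine (Ideal.span_le.2 ?_ : varsIdeal K n ≤ RingHom.ker constantCoeff) hp
  rintro _ ⟨i, rfl⟩
  simp [RingHom.mem_ker]

variable (n K) in
/-- The augmentation of the Koszul complex. -/
noncomputable def augmentation :
    (Idx n 0 → MvPolynomial (Fin n) K) →ₗ[MvPolynomial (Fin n) K]
      MvPolynomial (Fin n) K ⧸ varsIdeal K n :=
  (varsIdeal K n).mkQ ∘ₗ LinearMap.proj ⟨∅, rfl⟩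

lemma augmentation_d (ω : Idx n 1 → MvPolynomial (Fin n) K) :
    augmentation n K (d (R := MvPolynomial (Fin n) K) X 0 ω) = 0 := by
  refine (Submodule.Quotient.mk_eq_zero _).2 ?_
  rw [LinearMap.proj_apply, d_apply, totalD_apply]
  refine Ideal.sum_mem _ fun i _ => ?_
  rw [zsmul_eq_mul, smul_eq_mul]
  exact Ideal.mul_mem_left _ _ (Ideal.mul_mem_right _ _ (Ideal.subset_span ⟨i, rfl⟩))

lemma exists_d_eq_of_augmentation_eq_zero (ω : Idx n 0 → MvPolynomial (Fin n) K)
    (h : augmentation n K ω = 0) :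
    ∃ η : Idx n 1 → MvPolynomial (Fin n) K, d (R := MvPolynomial (Fin n) K) X 0 η = ω :=
  exists_d_zero_eq ω (constantCoeff_eq_zero_of_mem ((Submodule.Quotient.mk_eq_zero _).1 h))

lemma augmentation_surjective : Function.Surjective (augmentation n K) := fun m => by
  obtain ⟨p, rfl⟩ := Submodule.mkQ_surjective _ m
  exact ⟨fun _ => p, rfl⟩

variable (n K) in
/-- The Koszul complex is a projective resolution of the residue field at the origin. -/
noncomputable def koszulResolution :
    ProjectiveResolution (ModuleCat.of (MvPolynomial (Fin n) K)
      (MvPolynomial (Fin n) K ⧸ varsIdeal K n)) where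
  complex := koszulComplex n K
  projective j := by
    change Projective (ModuleCat.of _ (Idx n j → MvPolynomial (Fin n) K))
    infer_instance
  π := (ChainComplex.toSingle₀Equiv _ _).symm ⟨ModuleCat.ofHom (augmentation n K), by
    rw [koszulComplex_d]
    ext1
    exact LinearMap.ext augmentation_d⟩
  quasiIso := ⟨fun j => by
    cases j with
    | zero =>
      rw [ChainComplex.quasiIsoAt₀_iff, ShortComplex.quasiIso_iff_of_zeros' _ rfl rfl rfl]
      constructor
      · rw [ShortComplex.moduleCat_exact_iff]
        intro ω hω
        obtain ⟨η, hη⟩ := exists_d_eq_of_augmentation_eq_zero ω hω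
        exact ⟨η, (koszulComplex_d_apply 0 η).trans hη⟩
      · rw [ModuleCat.epi_iff_surjective]
        exact augmentation_surjective
    | succ j =>
      rw [quasiIsoAt_iff_exactAt']
      · rw [HomologicalComplex.exactAt_iff' _ (j + 2) (j + 1) j (by simp) (by simp),
          ShortComplex.moduleCat_exact_iff]
        intro ω hω
        obtain ⟨η, hη⟩ := exists_d_eq_of_d_eq_zero ω ((koszulComplex_d_apply j ω).symm.trans hω)
        exact ⟨η, (koszulComplex_d_apply (j + 1) η).trans hη⟩
      · apply ChainComplex.exactAt_succ_single_obj⟩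

/-- The boundaries among the Koszul cycles of degree `j + 1`. -/
def boundaries {R : Type*} [CommRing R] (x : Fin n → R) (M : Type*) [AddCommGroup M] [Module R M]
    (j : ℕ) : Submodule R (LinearMap.ker (d (M := M) x j)) :=
  LinearMap.range ((d x (j + 1)).codRestrict (LinearMap.ker (d (M := M) x j)) (d_d x))

/-- A segment of the Koszul complex with coefficients in `M`. -/
noncomputable def koszulShortComplex (M : ModuleCat.{0} (MvPolynomial (Fin n) K)) (j : ℕ) :
    ShortComplex (ModuleCat.{0} (MvPolynomial (Fin n) K)) :=
  ShortComplex.mk (X₁ := ModuleCat.of _ (Idx n (j + 2) → M))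
    (X₂ := ModuleCat.of _ (Idx n (j + 1) → M)) (X₃ := ModuleCat.of _ (Idx n j → M))
    (ModuleCat.ofHom (d (R := MvPolynomial (Fin n) K) X (j + 1)))
    (ModuleCat.ofHom (d (R := MvPolynomial (Fin n) K) X j))
    (by ext1; exact LinearMap.ext fun ω => d_d X ω)

open TensorProduct in
lemma piScalarRight_lTensor_d {R : Type*} [CommRing R] {M : Type*} [AddCommGroup M] [Module R M]
    (x : Fin n → R) (j : ℕ) (z : M ⊗[R] (Idx n (j + 1) → R)) :
    piScalarRight R R M _ ((d x j).lTensor M z) = d x j (piScalarRight R R M _ z) := by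
  induction z with
  | zero => simp
  | add z w hz hw => rw [map_add, map_add, hz, hw, map_add, map_add]
  | tmul m ω =>
    rw [LinearMap.lTensor_tmul]
    ext A
    simp only [piScalarRight_apply, piScalarRightHom_tmul, d_apply, totalD_apply, Finset.sum_smul]
    refine Finset.sum_congr rfl fun i hi => ?_
    have h : (insert i A.1).card = j + 1 := by
      rw [Finset.card_insert_of_notMem (Finset.mem_compl.1 hi), A.2]
    rw [extend_of_card_eq _ h, extend_of_card_eq _ h]
    rw [smul_assoc, smul_eq_mul, mul_smul]

open TensorProduct in
/-- Tensoring the Koszul complex with `M` gives the Koszul complex with coefficients in `M`. -/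
noncomputable def tensorKoszulIso (M : ModuleCat.{0} (MvPolynomial (Fin n) K)) (j : ℕ) :
    ((((MonoidalCategory.tensoringLeft _).obj M).mapHomologicalComplex _).obj
      (koszulComplex n K)).sc' (j + 2) (j + 1) j ≅ koszulShortComplex M j :=
  ShortComplex.isoMk
    (piScalarRight (MvPolynomial (Fin n) K) (MvPolynomial (Fin n) K) M (Idx n (j + 2))).toModuleIso
    (piScalarRight (MvPolynomial (Fin n) K) (MvPolynomial (Fin n) K) M (Idx n (j + 1))).toModuleIso
    (piScalarRight (MvPolynomial (Fin n) K) (MvPolynomial (Fin n) K) M (Idx n j)).toModuleIso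
    (by
      change _ = MonoidalCategory.whiskerLeft M ((koszulComplex n K).d ((j + 1) + 1) (j + 1)) ≫ _
      rw [koszulComplex_d]
      ext1
      exact LinearMap.ext fun z => (piScalarRight_lTensor_d X (j + 1) z).symm)
    (by
      change _ = MonoidalCategory.whiskerLeft M ((koszulComplex n K).d (j + 1) j) ≫ _
      rw [koszulComplex_d]
      ext1
      exact LinearMap.ext fun z => (piScalarRight_lTensor_d X j z).symm)

/-- `Tor` against the residue field is Koszul homology. -/
noncomputable def torModuleIso (N : Ideal (MvPolynomial (Fin n) K)) (j : ℕ) :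
    torModule K n N (j + 1) ≅
      ModuleCat.of (MvPolynomial (Fin n) K)
        (LinearMap.ker (d (R := MvPolynomial (Fin n) K) (M := MvPolynomial (Fin n) K ⧸ N) X j) ⧸
          boundaries X (MvPolynomial (Fin n) K ⧸ N) j) :=
  (koszulResolution n K).isoLeftDerivedObj
      ((MonoidalCategory.tensoringLeft _).obj (ModuleCat.of _ (MvPolynomial (Fin n) K ⧸ N)))
      (j + 1) ≪≫
    (HomologicalComplex.homologyFunctorIso' _ _ (j + 2) (j + 1) j (by simp) (by simp)).app _ ≪≫
    ShortComplex.homologyMapIso (tensorKoszulIso _ j) ≪≫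
    ShortComplex.moduleCatHomologyIso _

lemma kdim_of {R : Type} [CommRing R] [Algebra K R] (M : Type) [AddCommGroup M] [Module R M]
    [Module K M] [IsScalarTower K R M] : kdim K R (ModuleCat.of R M) = Module.rank K M := by
  have : Module.compHom M (algebraMap K R) = ‹Module K M› :=
    Module.ext' _ _ fun r m => algebraMap_smul R r m
  rw [kdim]
  congr

lemma kdim_congr {R : Type} [CommRing R] [Algebra K R] {M N : ModuleCat.{0} R} (e : M ≅ N) :
    kdim K R M = kdim K R N := by
  let : Module K M := Module.compHom M (algebraMap K R)
  let : Module K N := Module.compHom N (algebraMap K R)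
  exact LinearEquiv.rank_eq (R := K)
    { e.toLinearEquiv.toAddEquiv with
      map_smul' := fun r m => e.toLinearEquiv.map_smul (algebraMap K R r) m }

lemma kdim_torModule_succ [NeZero n] (j : ℕ) :
    kdim K (MvPolynomial (Fin n) K) (torModule K n (pairIdeal K n) (j + 1)) =
      ((j + 1) * n.choose (j + 2) : ℕ) := by
  rw [kdim_congr (torModuleIso _ j), kdim_of]
  have hker : (boundaries X (MvPolynomial (Fin n) K ⧸ pairIdeal K n) j).restrictScalars K =
      LinearMap.ker (cycleCoord (K := K) (n := n) j) := by
    ext ω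
    rw [LinearMap.mem_ker, cycleCoord_eq_zero_iff]
    constructor
    · rintro ⟨η, rfl⟩
      exact ⟨η, rfl⟩
    · rintro ⟨η, hη⟩
      exact ⟨η, Subtype.ext hη⟩
  rw [← (Submodule.Quotient.restrictScalarsEquiv K _).rank_eq,
    ((Submodule.quotEquivOfEq _ _ hker).trans
      ((cycleCoord (K := K) (n := n) j).quotKerEquivOfSurjective
        (cycleCoord_surjective j))).rank_eq, rank_eq_card_basis (Pi.basis fun _ => Pi.basisFun K _)]
  simp [mul_comm]

end Resolution

end Koszul

/-- Let `I_{2,n} ⊆ P = K[y_1,…,y_n]` be the ideal generated by all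
squarefree monomials of degree 2.  Then for `0 ≤ h ≤ n-2`,
`dim_K Tor_{h+1}^P(P/I_{2,n}, P/𝔪) = (h+1)·C(n,h+2)`, and `Tor_j^P(P/I_{2,n}, P/𝔪) = 0`
for all `j ≥ n`: the total Betti numbers of `I_{2,n}` coincide with those of the rational
normal curve in `ℙ^n`. -/
theorem betti_numbers_of_squarefree_degree_two_ideal
    (K : Type) [Field K] [Infinite K] (n : ℕ) (hn : 2 ≤ n) :
    (∀ h : ℕ, h ≤ n - 2 →
      kdim K (MvPolynomial (Fin n) K)
          (torModule K n
            (Ideal.span {g : MvPolynomial (Fin n) K | ∃ i j : Fin n, i < j ∧ g = X i * X j})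
            (h + 1)) =
        ((h + 1) * Nat.choose n (h + 2) : ℕ)) ∧
    (∀ j : ℕ, n ≤ j →
      Subsingleton
        (torModule K n
          (Ideal.span {g : MvPolynomial (Fin n) K | ∃ i j : Fin n, i < j ∧ g = X i * X j})
          j)) := by
  have : NeZero n := ⟨by omega⟩
  refine ⟨fun h _ => Koszul.kdim_torModule_succ h, fun j hj => ?_⟩
  obtain ⟨j, rfl⟩ := Nat.exists_eq_add_of_le' (show 1 ≤ j by omega)
  have h := Koszul.kdim_torModule_succ (K := K) (n := n) j
  rw [Nat.choose_eq_zero_of_lt (by omega), mul_zero, Nat.cast_zero, kdim] at h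
  let := Module.compHom (torModule K n (Koszul.pairIdeal K n) (j + 1))
    (algebraMap K (MvPolynomial (Fin n) K))
  exact rank_zero_iff.1 h
end

section
/- Let S = K[x_1, …, x_n] with n ≥ 2, let ℓ_1, …, ℓ_n be positive integers and let Ω = ⋂_{k=1}^n (x_1^{ℓ_1}, …, x_{k−1}^{ℓ_{k−1}}, x_{k+1}^{ℓ_{k+1}}, …, x_n^{ℓ_n}) = (x_i^{ℓ_i} x_j^{ℓ_j} : 1 ≤ i < j ≤ n). Then for every h with 0 ≤ h ≤ n−2, dim_K Tor_{h+1}^S(S/Ω, S/(x_1, …, x_n)) = (h+1)·C(n, h+2), and Tor_j^S(S/Ω, S/(x_1, …, x_n)) = 0 for all j ≥ n. -/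
open CategoryTheory MvPolynomial

section HomologicalAlgebra

open MonoidalCategory Limits

variable {K R : Type} [Field K] [CommRing R] [Algebra K R]

/-- If `0 ⟶ M₁ ⟶ M₂ ⟶ M₃ ⟶ 0` is a short exact sequence of `R`-modules then
`dim_K M₂ = dim_K M₃ + dim_K M₁`. -/
lemma kdim_add_of_shortExact {S : ShortComplex (ModuleCat R)} (hS : S.ShortExact) :
    kdim K R S.X₃ + kdim K R S.X₁ = kdim K R S.X₂ := by
  let m₁ : Module K S.X₁ := Module.compHom S.X₁ (algebraMap K R)
  let m₂ : Module K S.X₂ := Module.compHom S.X₂ (algebraMap K R)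
  let m₃ : Module K S.X₃ := Module.compHom S.X₃ (algebraMap K R)
  let f : S.X₁ →ₗ[K] S.X₂ :=
    { S.f.hom.toAddMonoidHom with map_smul' := fun c x => S.f.hom.map_smul (algebraMap K R c) x }
  let g : S.X₂ →ₗ[K] S.X₃ :=
    { S.g.hom.toAddMonoidHom with map_smul' := fun c x => S.g.hom.map_smul (algebraMap K R c) x }
  have hf : Function.Injective f := hS.moduleCat_injective_f
  have hg : Function.Surjective g := hS.moduleCat_surjective_g
  have hfg : Function.Exact f g := (ShortComplex.ShortExact.moduleCat_exact_iff_function_exact S).1 hS.exact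
  have h := LinearMap.rank_range_add_rank_ker g
  rw [rank_range_of_surjective g hg, LinearMap.exact_iff.1 hfg, rank_range_of_injective f hf] at h
  exact h

lemma kdim_congr {M N : ModuleCat R} (e : M ≅ N) : kdim K R M = kdim K R N := by
  let m₁ : Module K M := Module.compHom M (algebraMap K R)
  let m₂ : Module K N := Module.compHom N (algebraMap K R)
  let f : M ≃ₗ[K] N :=
    { e.toLinearEquiv.toAddEquiv with
      map_smul' := fun c x => e.toLinearEquiv.map_smul (algebraMap K R c) x }
  exact f.rank_eq

lemma kdim_eq_zero_iff {M : ModuleCat R} : kdim K R M = 0 ↔ Subsingleton M := by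
  let m₁ : Module K M := Module.compHom M (algebraMap K R)
  exact rank_zero_iff

lemma kdim_eq_one {M : ModuleCat R} (v : M) (hv : v ≠ 0)
    (h : ∀ w : M, ∃ c : K, algebraMap K R c • v = w) : kdim K R M = 1 := by
  let m₁ : Module K M := Module.compHom M (algebraMap K R)
  exact rank_eq_one v hv h

variable {M : ModuleCat R}

/-- The complex `X ⊗ P` for a projective resolution `P` of `M`. -/
noncomputable abbrev tensorResolution (P : ProjectiveResolution M) (X : ModuleCat R) :
    ChainComplex (ModuleCat R) ℕ :=
  ((tensorLeft X).mapHomologicalComplex _).obj P.complex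

/-- The map `X ⊗ P ⟶ Y ⊗ P` induced by `X ⟶ Y`. -/
noncomputable abbrev tensorResolutionMap (P : ProjectiveResolution M) {X Y : ModuleCat R}
    (f : X ⟶ Y) : tensorResolution P X ⟶ tensorResolution P Y :=
  (NatTrans.mapHomologicalComplex ((tensoringLeft _).map f) _).app P.complex

/-- `Tor_i(X, M)` is the homology of `X ⊗ P`. -/
noncomputable def torIsoHomology (P : ProjectiveResolution M) (X : ModuleCat R) (i : ℕ) :
    ((Tor (ModuleCat R) i).obj X).obj M ≅ (tensorResolution P X).homology i :=
  P.isoLeftDerivedObj ((tensoringLeft _).obj X) i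

/-- `- ⊗ P` applied to a short complex. -/
noncomputable def tensorResolutionShortComplex (P : ProjectiveResolution M)
    (S : ShortComplex (ModuleCat R)) : ShortComplex (ChainComplex (ModuleCat R) ℕ) where
  X₁ := tensorResolution P S.X₁
  X₂ := tensorResolution P S.X₂
  X₃ := tensorResolution P S.X₃
  f := tensorResolutionMap P S.f
  g := tensorResolutionMap P S.g
  zero := by
    ext i : 1
    change S.f ▷ P.complex.X i ≫ S.g ▷ P.complex.X i = 0
    rw [← comp_whiskerRight, S.zero, MonoidalPreadditive.zero_whiskerRight]

lemma shortExact_tensorResolutionShortComplex (P : ProjectiveResolution M)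
    {S : ShortComplex (ModuleCat R)} (hS : S.ShortExact) :
    (tensorResolutionShortComplex P S).ShortExact := by
  refine HomologicalComplex.shortExact_of_degreewise_shortExact _ fun i => ?_
  have : Module.Projective R (P.complex.X i) :=
    (IsProjective.iff_projective _).2 (P.projective i)
  exact hS.map_of_exact (tensorRight (P.complex.X i))

/-- If the scalar `r` kills `M`, then a map divisible by `r` induces the zero map on homology of
`X ⊗ P`. -/
lemma homologyMap_tensorResolutionMap_eq_zero (P : ProjectiveResolution M) {X Y : ModuleCat R}
    (r : R) (hr : ∀ x : M, r • x = 0) (f g : X ⟶ Y) (hf : ∀ x, f.hom x = r • g.hom x) (i : ℕ) :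
    HomologicalComplex.homologyMap (tensorResolutionMap P f) i = 0 := by
  have h : Homotopy (r • 𝟙 P.complex) 0 :=
    ProjectiveResolution.liftHomotopyZero (Q := P) _ (by
      rw [Linear.smul_comp, Category.id_comp]
      ext x
      change r • (P.π.f 0).hom x = 0
      exact hr _)
  have h2 : tensorResolutionMap P f = tensorResolutionMap P g ≫
      ((tensorLeft Y).mapHomologicalComplex _).map (r • 𝟙 P.complex) := by
    ext i : 1
    apply ModuleCat.hom_ext
    apply TensorProduct.ext'
    intro x y
    change f.hom x ⊗ₜ[R] y = g.hom x ⊗ₜ[R] (r • y)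
    rw [hf, TensorProduct.tmul_smul, TensorProduct.smul_tmul']
  rw [h2, HomologicalComplex.homologyMap_comp,
    ((tensorLeft Y).mapHomotopy h).homologyMap_eq i]
  simp

lemma isZero_tor_unit (i : ℕ) : IsZero (((Tor (ModuleCat R) (i + 1)).obj (𝟙_ _)).obj M) := by
  let P := projectiveResolution M
  have e := (NatIso.mapHomologicalComplex (leftUnitorNatIso (ModuleCat R))
    (ComplexShape.down ℕ) ≪≫ Functor.mapHomologicalComplexIdIso _ _).app P.complex
  have := (P.complex_exactAt_succ i).of_iso e.symm
  exact (this.isZero_homology).of_iso (torIsoHomology P _ _)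

section

variable (P : ProjectiveResolution M) {S : ShortComplex (ModuleCat R)} (hS : S.ShortExact)
  (hf : ∀ i, HomologicalComplex.homologyMap (tensorResolutionMap P S.f) i = 0)

include hS hf

lemma kdim_tor_succ_of_homologyMap_eq_zero (i : ℕ) :
    kdim K R (((Tor (ModuleCat R) (i + 1)).obj S.X₃).obj M) =
      kdim K R (((Tor (ModuleCat R) (i + 1)).obj S.X₂).obj M) +
        kdim K R (((Tor (ModuleCat R) i).obj S.X₁).obj M) := by
  have hT := shortExact_tensorResolutionShortComplex P hS
  have hrel : (ComplexShape.down ℕ).Rel (i + 1) i := rfl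
  have : Mono (HomologicalComplex.homologyMap (tensorResolutionShortComplex P S).g (i + 1)) :=
    (hT.homology_exact₂ (i + 1)).mono_g (hf (i + 1))
  have : Epi (hT.δ (i + 1) i hrel) := (hT.homology_exact₁ (i + 1) i hrel).epi_f (hf i)
  have hE : (ShortComplex.mk _ _ (hT.comp_δ (i + 1) i hrel)).ShortExact :=
    { exact := hT.homology_exact₃ (i + 1) i hrel }
  have h := kdim_add_of_shortExact (K := K) hE
  rw [kdim_congr (torIsoHomology P S.X₃ (i + 1)), kdim_congr (torIsoHomology P S.X₂ (i + 1)),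
    kdim_congr (torIsoHomology P S.X₁ i)]
  exact h.symm.trans (add_comm _ _)

lemma kdim_tor_zero_of_homologyMap_eq_zero :
    kdim K R (((Tor (ModuleCat R) 0).obj S.X₃).obj M) =
      kdim K R (((Tor (ModuleCat R) 0).obj S.X₂).obj M) := by
  have hT := shortExact_tensorResolutionShortComplex P hS
  have : Mono (HomologicalComplex.homologyMap (tensorResolutionShortComplex P S).g 0) :=
    (hT.homology_exact₂ 0).mono_g (hf 0)
  have := hT.epi_g
  have : Epi (HomologicalComplex.homologyMap (tensorResolutionShortComplex P S).g 0) :=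
    HomologicalComplex.epi_homologyMap_of_epi_of_not_rel _ _ (by simp)
  have := isIso_of_mono_of_epi (HomologicalComplex.homologyMap
    (tensorResolutionShortComplex P S).g 0)
  rw [kdim_congr (torIsoHomology P S.X₃ 0), kdim_congr (torIsoHomology P S.X₂ 0)]
  exact (kdim_congr (asIso (HomologicalComplex.homologyMap
    (tensorResolutionShortComplex P S).g 0))).symm

end

/-- Multiplication by `m` as a short exact sequence `0 → R/J → R/I → R/(I + (m)) → 0`, where
`J = (I : m)`. -/
noncomputable def colonShortComplex (I J : Ideal R) (m : R) (hJ : ∀ x, x ∈ J ↔ x * m ∈ I) :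
    ShortComplex (ModuleCat R) where
  X₁ := ModuleCat.of R (R ⧸ J)
  X₂ := ModuleCat.of R (R ⧸ I)
  X₃ := ModuleCat.of R (R ⧸ (I ⊔ Ideal.span {m}))
  f := ModuleCat.ofHom (Submodule.mapQ J I (LinearMap.mulRight R m) fun x hx => (hJ x).1 hx)
  g := ModuleCat.ofHom (Submodule.factor le_sup_left)
  zero := by
    refine ModuleCat.hom_ext (LinearMap.ext fun x => ?_)
    obtain ⟨x, rfl⟩ := Ideal.Quotient.mk_surjective x
    exact Ideal.Quotient.eq_zero_iff_mem.2
      (Ideal.mul_mem_left _ _ (Ideal.mem_sup_right (Ideal.mem_span_singleton_self m)))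

lemma shortExact_colonShortComplex (I J : Ideal R) (m : R) (hJ : ∀ x, x ∈ J ↔ x * m ∈ I) :
    (colonShortComplex I J m hJ).ShortExact where
  exact := by
    rw [ShortComplex.ShortExact.moduleCat_exact_iff_function_exact]
    intro y
    obtain ⟨y, rfl⟩ := Ideal.Quotient.mk_surjective y
    refine ⟨fun h => ?_, ?_⟩
    · obtain ⟨u, hu, v, hv, rfl⟩ := Submodule.mem_sup.1 (Ideal.Quotient.eq_zero_iff_mem.1 h)
      obtain ⟨c, rfl⟩ := Ideal.mem_span_singleton'.1 hv
      refine ⟨Ideal.Quotient.mk J c, Ideal.Quotient.eq.2 ?_⟩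
      simpa using hu
    · rintro ⟨x, hx⟩
      obtain ⟨x, rfl⟩ := Ideal.Quotient.mk_surjective x
      rw [← hx]
      exact Ideal.Quotient.eq_zero_iff_mem.2
        (Ideal.mul_mem_left _ _ (Ideal.mem_sup_right (Ideal.mem_span_singleton_self m)))
  mono_f := by
    rw [ModuleCat.mono_iff_injective]
    refine (injective_iff_map_eq_zero (colonShortComplex I J m hJ).f.hom).2 fun x hx => ?_
    obtain ⟨x, rfl⟩ := Ideal.Quotient.mk_surjective x
    exact Ideal.Quotient.eq_zero_iff_mem.2 ((hJ x).2 (Ideal.Quotient.eq_zero_iff_mem.1 hx))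
  epi_g := by
    rw [ModuleCat.epi_iff_surjective]
    exact Submodule.factor_surjective (le_sup_left : I ≤ I ⊔ Ideal.span {m})

/-- If multiplication by `a * b : R/(I : ab) → R/I` factors through multiplication by `a`
and `b` kills `M`, then it is zero on `Tor(-, M)`. -/
lemma homologyMap_colonShortComplex_eq_zero (P : ProjectiveResolution M) (I J : Ideal R)
    (a b : R) (hJ : ∀ x, x ∈ J ↔ x * (a * b) ∈ I) (ha : ∀ x ∈ J, x * a ∈ I)
    (hb : ∀ x : M, b • x = 0) (i : ℕ) :
    HomologicalComplex.homologyMap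
      (tensorResolutionMap P (colonShortComplex I J (a * b) hJ).f) i = 0 := by
  refine homologyMap_tensorResolutionMap_eq_zero P b hb _
    (ModuleCat.ofHom (Submodule.mapQ J I (LinearMap.mulRight R a) fun x hx => ha x hx))
    (fun x => ?_) i
  obtain ⟨x, rfl⟩ := Ideal.Quotient.mk_surjective x
  change Ideal.Quotient.mk I (x * (a * b)) = Ideal.Quotient.mk I (b * (x * a))
  congr 1
  ring

lemma kdim_tor_unit_zero {X : ModuleCat R} (e : X ≅ 𝟙_ (ModuleCat R)) :
    kdim K R (((Tor (ModuleCat R) 0).obj X).obj M) = kdim K R M :=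
  kdim_congr (((Tor (ModuleCat R) 0).mapIso e).app M ≪≫
    ((tensoringLeft _).obj (𝟙_ _)).leftDerivedZeroIsoSelf.app M ≪≫ λ_ M)

lemma kdim_tor_unit_succ {X : ModuleCat R} (e : X ≅ 𝟙_ (ModuleCat R)) (i : ℕ) :
    kdim K R (((Tor (ModuleCat R) (i + 1)).obj X).obj M) = 0 := by
  rw [kdim_eq_zero_iff]
  exact ModuleCat.subsingleton_of_isZero
    ((isZero_tor_unit i).of_iso (((Tor (ModuleCat R) (i + 1)).mapIso e).app M))

end HomologicalAlgebra

section MonomialIdeals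

open MonoidalCategory

variable {K : Type} [Field K] {n : ℕ}

/-- The ideal generated by the monomials with exponents in `U`. -/
noncomputable def monomialIdeal (K : Type) [Field K] {n : ℕ} (U : Set (Fin n →₀ ℕ)) :
    Ideal (MvPolynomial (Fin n) K) :=
  Ideal.span ((fun d => monomial d (1 : K)) '' U)

lemma mem_monomialIdeal {U : Set (Fin n →₀ ℕ)} (hU : IsUpperSet U)
    {x : MvPolynomial (Fin n) K} : x ∈ monomialIdeal K U ↔ ∀ d ∈ x.support, d ∈ U := by
  rw [monomialIdeal, mem_ideal_span_monomial_image]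
  exact forall₂_congr fun d _ => ⟨fun ⟨_, hs, hsd⟩ => hU hsd hs, fun h => ⟨d, h, le_rfl⟩⟩

lemma mul_monomial_mem_monomialIdeal {U : Set (Fin n →₀ ℕ)} (hU : IsUpperSet U)
    {x : MvPolynomial (Fin n) K} {m : Fin n →₀ ℕ} :
    x * monomial m 1 ∈ monomialIdeal K U ↔ ∀ d ∈ x.support, d + m ∈ U := by
  rw [mem_monomialIdeal hU]
  constructor
  · intro h d hd
    exact h _ (by simpa [mem_support_iff, coeff_mul_monomial] using hd)
  · intro h d hd
    rw [mem_support_iff, coeff_mul_monomial'] at hd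
    split_ifs at hd with hmd
    · rw [← tsub_add_cancel_of_le hmd]
      exact h _ (by simpa [mem_support_iff] using hd)
    · exact absurd rfl hd

lemma monomialIdeal_sup_span (U : Set (Fin n →₀ ℕ)) (m : Fin n →₀ ℕ) :
    monomialIdeal K U ⊔ Ideal.span {monomial m 1} = monomialIdeal K (U ∪ Set.Ici m) := by
  rw [monomialIdeal, monomialIdeal, Set.image_union, Ideal.span_union]
  congr 1
  refine le_antisymm (Ideal.span_mono ?_) (Ideal.span_le.2 ?_)
  · rintro _ rfl
    exact ⟨m, Set.mem_Ici.2 le_rfl, rfl⟩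
  · rintro _ ⟨d, hd, rfl⟩
    refine Ideal.mem_span_singleton.2 ?_
    exact monomial_dvd_monomial.2 ⟨Or.inr hd, one_dvd _⟩

lemma monomial_smul_quotient_eq_zero {q : Fin n →₀ ℕ} (hq : q ≠ 0)
    (x : ModuleCat.of (MvPolynomial (Fin n) K) (MvPolynomial (Fin n) K ⧸
      Ideal.span (Set.range (X : Fin n → MvPolynomial (Fin n) K)))) :
    monomial q (1 : K) • x = 0 := by
  obtain ⟨x, rfl⟩ := Ideal.Quotient.mk_surjective x
  refine Ideal.Quotient.eq_zero_iff_mem.2 (Ideal.mul_mem_right _ _ ?_)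
  rw [← Set.image_univ, mem_ideal_span_X_image]
  intro d hd
  obtain rfl : d = q := Finset.mem_singleton.1 (support_monomial_subset hd)
  obtain ⟨i, hi⟩ := Finsupp.ne_iff.1 hq
  exact ⟨i, Set.mem_univ i, hi⟩

section

variable {U V : Set (Fin n →₀ ℕ)} (hU : IsUpperSet U) (p : Fin n →₀ ℕ) {q : Fin n →₀ ℕ}
  (hq : q ≠ 0) (hV : ∀ d, d ∈ V ↔ d + (p + q) ∈ U) (hp : ∀ d ∈ V, d + p ∈ U)

include hU hV

lemma isUpperSet_of_mem_iff_add_mem : IsUpperSet V := fun d e hde hd =>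
  (hV e).2 (hU (add_le_add_left hde (p + q)) ((hV d).1 hd))

lemma mem_monomialIdeal_iff_mul_mem (x : MvPolynomial (Fin n) K) :
    x ∈ monomialIdeal K V ↔ x * (monomial p 1 * monomial q 1) ∈ monomialIdeal K U := by
  rw [monomial_mul, one_mul, mul_monomial_mem_monomialIdeal hU,
    mem_monomialIdeal (isUpperSet_of_mem_iff_add_mem hU p hV)]
  exact forall₂_congr fun d _ => hV d

include hp

lemma mul_monomial_mem_of_mem (x : MvPolynomial (Fin n) K) (hx : x ∈ monomialIdeal K V) :
    x * monomial p 1 ∈ monomialIdeal K U := by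
  rw [mul_monomial_mem_monomialIdeal hU]
  exact fun d hd => hp d ((mem_monomialIdeal (isUpperSet_of_mem_iff_add_mem hU p hV)).1 hx d hd)

include hq

lemma kdim_torModule_union_succ (h : ℕ) :
    kdim K _ (torModule K n (monomialIdeal K (U ∪ Set.Ici (p + q))) (h + 1)) =
      kdim K _ (torModule K n (monomialIdeal K U) (h + 1)) +
        kdim K _ (torModule K n (monomialIdeal K V) h) := by
  have hJ := mem_monomialIdeal_iff_mul_mem (K := K) hU p hV
  have key := kdim_tor_succ_of_homologyMap_eq_zero (K := K) (projectiveResolution _)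
    (shortExact_colonShortComplex _ _ _ hJ)
    (homologyMap_colonShortComplex_eq_zero _ _ _ _ _ hJ
      (mul_monomial_mem_of_mem hU p hV hp) (monomial_smul_quotient_eq_zero hq)) h
  rw [← monomialIdeal_sup_span, ← one_mul (1 : K), ← monomial_mul]
  exact key

lemma kdim_torModule_union_zero :
    kdim K _ (torModule K n (monomialIdeal K (U ∪ Set.Ici (p + q))) 0) =
      kdim K _ (torModule K n (monomialIdeal K U) 0) := by
  have hJ := mem_monomialIdeal_iff_mul_mem (K := K) hU p hV
  have key := kdim_tor_zero_of_homologyMap_eq_zero (K := K) (projectiveResolution _)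
    (shortExact_colonShortComplex _ _ _ hJ)
    (homologyMap_colonShortComplex_eq_zero _ _ _ _ _ hJ
      (mul_monomial_mem_of_mem hU p hV hp) (monomial_smul_quotient_eq_zero hq))
  rw [← monomialIdeal_sup_span, ← one_mul (1 : K), ← monomial_mul]
  exact key

end

lemma kdim_residueField :
    kdim K _ (ModuleCat.of (MvPolynomial (Fin n) K) (MvPolynomial (Fin n) K ⧸
      Ideal.span (Set.range (X : Fin n → MvPolynomial (Fin n) K)))) = 1 := by
  have hm (x : MvPolynomial (Fin n) K) :
      x ∈ Ideal.span (Set.range (X : Fin n → MvPolynomial (Fin n) K)) ↔ coeff 0 x = 0 := by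
    rw [← Set.image_univ, mem_ideal_span_X_image]
    constructor
    · intro h
      by_contra h0
      obtain ⟨i, -, hi⟩ := h 0 (mem_support_iff.2 h0)
      exact hi rfl
    · intro h d hd
      have hd0 : d ≠ 0 := by
        rintro rfl
        exact mem_support_iff.1 hd h
      obtain ⟨i, hi⟩ := Finsupp.ne_iff.1 hd0
      exact ⟨i, Set.mem_univ i, hi⟩
  refine kdim_eq_one (Ideal.Quotient.mk _ 1) ?_ ?_
  · refine fun h => one_ne_zero (α := K) ?_
    rw [← coeff_zero_one (σ := Fin n), ← hm]
    exact Ideal.Quotient.eq_zero_iff_mem.1 h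
  · intro w
    obtain ⟨w, rfl⟩ := Ideal.Quotient.mk_surjective w
    refine ⟨coeff 0 w, ?_⟩
    change Ideal.Quotient.mk _ (C (coeff 0 w) * 1) = _
    rw [Ideal.Quotient.eq, hm]
    simp

lemma kdim_torModule_empty (h : ℕ) :
    kdim K _ (torModule K n (monomialIdeal K ∅) h) = ((0 : ℕ).choose h : ℕ) := by
  have e : ModuleCat.of _ (MvPolynomial (Fin n) K ⧸ monomialIdeal K ∅) ≅
      𝟙_ (ModuleCat (MvPolynomial (Fin n) K)) :=
    (Submodule.quotEquivOfEqBot _ (by simp [monomialIdeal])).toModuleIso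
  cases h with
  | zero =>
    rw [Nat.choose_zero_right, Nat.cast_one]
    exact (kdim_tor_unit_zero e).trans kdim_residueField
  | succ h =>
    rw [Nat.choose_zero_succ, Nat.cast_zero]
    exact kdim_tor_unit_succ e h

lemma kdim_torModule_powers (ℓ : Fin n → ℕ) (hℓ : ∀ j, 0 < ℓ j) (A : Finset (Fin n)) (h : ℕ) :
    kdim K _ (torModule K n (monomialIdeal K {d | ∃ a ∈ A, ℓ a ≤ d a}) h) =
      (A.card.choose h : ℕ) := by
  induction A using Finset.induction_on generalizing h with
  | empty => simpa using kdim_torModule_empty h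
  | insert y A hy ih =>
    have hU : IsUpperSet {d : Fin n →₀ ℕ | ∃ a ∈ A, ℓ a ≤ d a} :=
      fun d e hde ⟨a, ha, h⟩ => ⟨a, ha, h.trans (hde a)⟩
    have hq : Finsupp.single y (ℓ y) ≠ 0 := by simpa using (hℓ y).ne'
    have hV (d : Fin n →₀ ℕ) : d ∈ {d : Fin n →₀ ℕ | ∃ a ∈ A, ℓ a ≤ d a} ↔
        d + (0 + Finsupp.single y (ℓ y)) ∈ {d : Fin n →₀ ℕ | ∃ a ∈ A, ℓ a ≤ d a} := by
      refine exists_congr fun a => and_congr_right fun ha => ?_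
      have : y ≠ a := by rintro rfl; exact hy ha
      simp [this]
    have hset : {d : Fin n →₀ ℕ | ∃ a ∈ insert y A, ℓ a ≤ d a} =
        {d | ∃ a ∈ A, ℓ a ≤ d a} ∪ Set.Ici (0 + Finsupp.single y (ℓ y)) := by
      ext d
      simp [or_comm]
    rw [hset, Finset.card_insert_of_notMem hy]
    cases h with
    | zero => simpa [ih] using kdim_torModule_union_zero (K := K) hU 0 hq hV (by simp)
    | succ h =>
      rw [kdim_torModule_union_succ hU 0 hq hV (by simp), ih, ih, Nat.choose_succ_succ]
      push_cast
      rw [add_comm]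

/-- Exponents `d` such that `x^d` is divisible by `x_a^{ℓ_a} x_b^{ℓ_b}` for some `a < b` with
`b < j`, or `b = j` and `a < i`. -/
def edgeExponents (ℓ : Fin n → ℕ) (j i : ℕ) : Set (Fin n →₀ ℕ) :=
  {d | ∃ a b : Fin n, a < b ∧ ((b : ℕ) < j ∨ (b : ℕ) = j ∧ (a : ℕ) < i) ∧ ℓ a ≤ d a ∧ ℓ b ≤ d b}

lemma isUpperSet_edgeExponents (ℓ : Fin n → ℕ) (j i : ℕ) :
    IsUpperSet (edgeExponents ℓ j i) :=
  fun _ _ hde ⟨a, b, hab, h, ha, hb⟩ =>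
    ⟨a, b, hab, h, ha.trans (hde a), hb.trans (hde b)⟩

lemma edgeExponents_self (ℓ : Fin n → ℕ) (j : ℕ) :
    edgeExponents ℓ j j = edgeExponents ℓ (j + 1) 0 := by
  ext d
  refine exists_congr fun a => exists_congr fun b => and_congr_right fun hab =>
    and_congr_left fun _ => ?_
  have : (a : ℕ) < b := hab
  omega

lemma edgeExponents_succ (ℓ : Fin n → ℕ) {i j : Fin n} (hij : i < j) :
    edgeExponents ℓ j (i + 1) = edgeExponents ℓ j i ∪
      Set.Ici (Finsupp.single i (ℓ i) + Finsupp.single j (ℓ j)) := by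
  have hle (d : Fin n →₀ ℕ) : Finsupp.single i (ℓ i) + Finsupp.single j (ℓ j) ≤ d ↔
      ℓ i ≤ d i ∧ ℓ j ≤ d j := by
    constructor
    · intro h
      have hi := h i
      have hj := h j
      simp only [Finsupp.add_apply, Finsupp.single_apply, hij.ne, hij.ne'] at hi hj
      simp at hi hj
      exact ⟨hi, hj⟩
    · rintro ⟨hi, hj⟩ k
      rw [Finsupp.add_apply, Finsupp.single_apply, Finsupp.single_apply]
      have := hij.ne
      split_ifs <;> grind
  ext d
  rw [Set.mem_union, Set.mem_Ici, hle]
  constructor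
  · rintro ⟨a, b, hab, h, ha, hb⟩
    by_cases hc : (b : ℕ) = j ∧ (a : ℕ) = i
    · obtain ⟨h1, h2⟩ := hc
      obtain rfl := Fin.ext h1
      obtain rfl := Fin.ext h2
      exact Or.inr ⟨ha, hb⟩
    · exact Or.inl ⟨a, b, hab, by omega, ha, hb⟩
  · rintro (⟨a, b, hab, h, ha, hb⟩ | ⟨hi, hj⟩)
    · exact ⟨a, b, hab, by omega, ha, hb⟩
    · exact ⟨i, j, hij, by omega, hi, hj⟩

lemma add_mem_edgeExponents_iff (ℓ : Fin n → ℕ) {i j : Fin n} (hij : i < j) (d : Fin n →₀ ℕ) :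
    d + (Finsupp.single i (ℓ i) + Finsupp.single j (ℓ j)) ∈ edgeExponents ℓ j i ↔
      ∃ a ∈ (Finset.Iio j).erase i, ℓ a ≤ d a := by
  have hval (a : Fin n) (hi : a ≠ i) (hj : a ≠ j) :
      (d + (Finsupp.single i (ℓ i) + Finsupp.single j (ℓ j))) a = d a := by
    simp [hi.symm, hj.symm]
  constructor
  · rintro ⟨a, b, hab, h, ha, hb⟩
    by_cases hai : a = i
    · subst hai
      have hbj : b < j := by
        rw [Fin.lt_def]
        omega
      rw [hval b hab.ne' hbj.ne] at hb
      exact ⟨b, by simp [hbj, hab.ne'], hb⟩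
    · have haj : a < j := by
        rw [Fin.lt_def] at hab ⊢
        omega
      rw [hval a hai haj.ne] at ha
      exact ⟨a, by simp [haj, hai], ha⟩
  · rintro ⟨a, ha, hd⟩
    obtain ⟨hai, haj⟩ : a ≠ i ∧ a < j := by simpa using ha
    have h1 : ℓ a ≤ (d + (Finsupp.single i (ℓ i) + Finsupp.single j (ℓ j))) a := by
      rwa [hval a hai haj.ne]
    have h2 : ℓ i ≤ (d + (Finsupp.single i (ℓ i) + Finsupp.single j (ℓ j))) i := by
      simp
      omega
    rcases lt_or_gt_of_ne hai with h | h
    · exact ⟨a, i, h, Or.inl hij, h1, h2⟩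
    · exact ⟨i, a, h, Or.inl haj, h2, h1⟩

lemma add_single_mem_edgeExponents (ℓ : Fin n → ℕ) {i j : Fin n} (hij : i < j)
    (d : Fin n →₀ ℕ) (hd : ∃ a ∈ (Finset.Iio j).erase i, ℓ a ≤ d a) :
    d + Finsupp.single i (ℓ i) ∈ edgeExponents ℓ j i := by
  obtain ⟨a, ha, hd⟩ := hd
  obtain ⟨hai, haj⟩ : a ≠ i ∧ a < j := by simpa using ha
  have h1 : ℓ a ≤ (d + Finsupp.single i (ℓ i)) a := by simpa [hai.symm] using hd
  have h2 : ℓ i ≤ (d + Finsupp.single i (ℓ i)) i := by simp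
  rcases lt_or_gt_of_ne hai with h | h
  · exact ⟨a, i, h, Or.inl hij, h1, h2⟩
  · exact ⟨i, a, h, Or.inl haj, h2, h1⟩

lemma kdim_torModule_edgeExponents_of_le (ℓ : Fin n → ℕ) (hℓ : ∀ j, 0 < ℓ j) (j : Fin n)
    (h i : ℕ) (hi : i ≤ j) :
    kdim K _ (torModule K n (monomialIdeal K (edgeExponents ℓ j i)) (h + 1)) =
      kdim K _ (torModule K n (monomialIdeal K (edgeExponents ℓ j 0)) (h + 1)) +
        (i * ((j : ℕ) - 1).choose h : ℕ) := by
  induction i with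
  | zero => simp
  | succ i ih =>
    obtain ⟨i, rfl⟩ : ∃ i' : Fin n, (i' : ℕ) = i := ⟨⟨i, by omega⟩, rfl⟩
    have hij : i < j := hi
    have hq : Finsupp.single j (ℓ j) ≠ 0 := by simpa using (hℓ j).ne'
    rw [edgeExponents_succ ℓ hij,
      kdim_torModule_union_succ (isUpperSet_edgeExponents ℓ j i) _ hq
        (V := {d | ∃ a ∈ (Finset.Iio j).erase i, ℓ a ≤ d a})
        (fun d => (add_mem_edgeExponents_iff ℓ hij d).symm)
        (fun d hd => add_single_mem_edgeExponents ℓ hij d hd),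
      ih (by omega), kdim_torModule_powers ℓ hℓ, Finset.card_erase_of_mem (by simpa using hij),
      Fin.card_Iio, add_assoc, ← Nat.cast_add, ← Nat.succ_mul]

lemma kdim_torModule_edgeExponents (ℓ : Fin n → ℕ) (hℓ : ∀ j, 0 < ℓ j) (h j : ℕ) (hj : j ≤ n) :
    kdim K _ (torModule K n (monomialIdeal K (edgeExponents ℓ j 0)) (h + 1)) =
      ((h + 1) * j.choose (h + 2) : ℕ) := by
  induction j with
  | zero =>
    have : edgeExponents ℓ 0 0 = ∅ := by
      simp [edgeExponents]
    rw [this, kdim_torModule_empty]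
    simp
  | succ j ih =>
    rw [← edgeExponents_self]
    have := kdim_torModule_edgeExponents_of_le (K := K) ℓ hℓ ⟨j, hj⟩ h j le_rfl
    rw [this, ih (by omega), ← Nat.cast_add]
    congr 1
    dsimp only
    cases j with
    | zero => simp [Nat.choose_eq_zero_of_lt]
    | succ j =>
      rw [Nat.add_sub_cancel, Nat.add_one_mul_choose_eq, Nat.choose_succ_succ (j + 1) (h + 1)]
      ring

lemma span_eq_monomialIdeal (ℓ : Fin n → ℕ) :
    Ideal.span {g : MvPolynomial (Fin n) K | ∃ i j : Fin n, i < j ∧ g = X i ^ ℓ i * X j ^ ℓ j} =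
      monomialIdeal K (edgeExponents ℓ n 0) := by
  refine le_antisymm (Ideal.span_le.2 ?_) (Ideal.span_le.2 ?_)
  · rintro _ ⟨i, j, hij, rfl⟩
    refine Ideal.subset_span ⟨Finsupp.single i (ℓ i) + Finsupp.single j (ℓ j), ?_, ?_⟩
    · refine ⟨i, j, hij, Or.inl j.2, ?_, ?_⟩ <;> simp
    · simp [X_pow_eq_monomial, monomial_mul]
  · rintro _ ⟨d, ⟨i, j, hij, -, hi, hj⟩, rfl⟩
    refine Ideal.mem_of_dvd _ ?_ (Ideal.subset_span ⟨i, j, hij, rfl⟩)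
    rw [X_pow_eq_monomial, X_pow_eq_monomial, monomial_mul, one_mul]
    refine monomial_dvd_monomial.2 ⟨Or.inr fun k => ?_, one_dvd _⟩
    rw [Finsupp.add_apply, Finsupp.single_apply, Finsupp.single_apply]
    have := hij.ne
    split_ifs <;> grind

end MonomialIdeals

/-- Let `Ω = (x_i^{ℓ_i} x_j^{ℓ_j} : i < j) ⊆ S = K[x_1,…,x_n]`, with
`ℓ_1,…,ℓ_n` positive.  Then for `0 ≤ h ≤ n-2`,
`dim_K Tor_{h+1}^S(S/Ω, S/𝔪) = (h+1)·C(n,h+2)`, and `Tor_j^S(S/Ω, S/𝔪) = 0` for `j ≥ n`. -/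
theorem betti_numbers_of_omega
    (K : Type) [Field K] [Infinite K] (n : ℕ) (hn : 2 ≤ n)
    (ℓ : Fin n → ℕ) (hℓ : ∀ j, 0 < ℓ j) :
    (∀ h : ℕ, h ≤ n - 2 →
      kdim K (MvPolynomial (Fin n) K)
          (torModule K n
            (Ideal.span {g : MvPolynomial (Fin n) K |
              ∃ i j : Fin n, i < j ∧ g = X i ^ ℓ i * X j ^ ℓ j})
            (h + 1)) =
        ((h + 1) * Nat.choose n (h + 2) : ℕ)) ∧
    (∀ j : ℕ, n ≤ j →
      Subsingleton
        (torModule K n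
          (Ideal.span {g : MvPolynomial (Fin n) K |
            ∃ i j : Fin n, i < j ∧ g = X i ^ ℓ i * X j ^ ℓ j})
          j)) := by
  rw [span_eq_monomialIdeal]
  refine ⟨fun h _ => kdim_torModule_edgeExponents ℓ hℓ h n le_rfl, fun j hj => ?_⟩
  obtain ⟨h, rfl⟩ : ∃ h, j = h + 1 := ⟨j - 1, by omega⟩
  rw [← kdim_eq_zero_iff (K := K), kdim_torModule_edgeExponents ℓ hℓ h n le_rfl,
    Nat.choose_eq_zero_of_lt (by omega), mul_zero, Nat.cast_zero]
end

section
/- Let f_1, …, f_n (n ≥ 2) be a regular sequence of homogeneous polynomials of positive degree in R = K[x_0, x_1, …, x_n], and let I = (f_i f_j : 1 ≤ i < j ≤ n). Then there exists an exact sequence of R-modules 0 → F_{n−2} → F_{n−3} → ⋯ → F_1 → F_0 → I → 0 in which each F_h is a free R-module of rank (h+1)·C(n, h+2); in particular F_0 has rank C(n,2) and F_{n−2} has rank n−1. -/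
open MvPolynomial

universe u

section FreeResolution

variable (R : Type u) [CommRing R]

/-- `M` has a free resolution `0 → F_{L-1} → ⋯ → F_0 → M → 0` with `F_h` free of rank `r h`;
the rank function `r` vanishes from `L` on. -/
def HasFreeResolution : ℕ → (ℕ → ℕ) → ∀ (M : Type u) [AddCommGroup M] [Module R M], Prop
  | 0, r, M, _, _ => (∀ h, r h = 0) ∧ Subsingleton M
  | L + 1, r, M, _, _ => ∃ φ : (Fin (r 0) → R) →ₗ[R] M, Function.Surjective φ ∧
      HasFreeResolution L (fun h => r (h + 1)) (LinearMap.ker φ)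

namespace HasFreeResolution

variable {R}

theorem succ {L : ℕ} {r : ℕ → ℕ} {M : Type u} [AddCommGroup M] [Module R M]
    (hM : HasFreeResolution R L r M) : HasFreeResolution R (L + 1) r M := by
  induction L generalizing r M with
  | zero =>
    obtain ⟨hr, hM⟩ := hM
    have : IsEmpty (Fin (r 0)) := by rw [hr]; infer_instance
    exact ⟨0, fun x => ⟨0, Subsingleton.elim _ _⟩, fun h => hr _, inferInstance⟩
  | succ L ih =>
    obtain ⟨φ, hφ, hk⟩ := hM
    exact ⟨φ, hφ, ih hk⟩

theorem exists_exact {L : ℕ} {r : ℕ → ℕ} {M : Type u} [AddCommGroup M] [Module R M]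
    (hM : HasFreeResolution R L r M) :
    ∃ (δ : (h : ℕ) → (Fin (r (h + 1)) → R) →ₗ[R] (Fin (r h) → R))
      (ε : (Fin (r 0) → R) →ₗ[R] M), Function.Surjective ε ∧
      LinearMap.range (δ 0) = LinearMap.ker ε ∧
      ∀ h : ℕ, LinearMap.range (δ (h + 1)) = LinearMap.ker (δ h) := by
  induction L generalizing r M with
  | zero =>
    obtain ⟨hr, hM⟩ := hM
    have hempty (h : ℕ) : IsEmpty (Fin (r h)) := by rw [hr]; infer_instance
    exact ⟨fun _ => 0, 0, fun x => ⟨0, Subsingleton.elim _ _⟩, Subsingleton.elim _ _,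
      fun h => Subsingleton.elim _ _⟩
  | succ L ih =>
    obtain ⟨φ, hφ, hk⟩ := hM
    obtain ⟨δ, ε, hε, hδ, hex⟩ := ih hk
    refine ⟨fun h => match h with
      | 0 => (LinearMap.ker φ).subtype ∘ₗ ε
      | h + 1 => δ h, φ, hφ, ?_, ?_⟩
    · change LinearMap.range ((LinearMap.ker φ).subtype ∘ₗ ε) = _
      rw [LinearMap.range_comp, LinearMap.range_eq_top.2 hε, Submodule.map_top,
        Submodule.range_subtype]
    · rintro (_ | h)
      · change LinearMap.range (δ 0) = LinearMap.ker ((LinearMap.ker φ).subtype ∘ₗ ε)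
        rw [LinearMap.ker_comp_of_ker_eq_bot _ (Submodule.ker_subtype _), hδ]
      · exact hex h

/-- The horseshoe lemma. -/
theorem of_shortExact {L : ℕ} {a c : ℕ → ℕ} {A B C : Type u} [AddCommGroup A] [Module R A]
    [AddCommGroup B] [Module R B] [AddCommGroup C] [Module R C]
    (hA : HasFreeResolution R L a A) (hC : HasFreeResolution R L c C)
    (i : A →ₗ[R] B) (p : B →ₗ[R] C) (hi : Function.Injective i) (hp : Function.Surjective p)
    (hip : Function.Exact i p) : HasFreeResolution R L (fun h => a h + c h) B := by
  induction L generalizing a c A B C with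
  | zero =>
    obtain ⟨ha, hA⟩ := hA
    obtain ⟨hc, hC⟩ := hC
    refine ⟨fun h => by simp [ha, hc], ⟨fun x y => ?_⟩⟩
    obtain ⟨u, hu⟩ := (hip (x - y)).1 (Subsingleton.elim _ _)
    rw [Subsingleton.elim u 0, map_zero] at hu
    exact sub_eq_zero.1 hu.symm
  | succ L ih =>
    obtain ⟨φ, hφ, hkA⟩ := hA
    obtain ⟨χ, hχ, hkC⟩ := hC
    obtain ⟨ψ, hψ⟩ := Module.projective_lifting_property p χ hp
    have hψ (x) : p (ψ x) = χ x := LinearMap.congr_fun hψ x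
    let e : (Fin (a 0 + c 0) → R) ≃ₗ[R] (Fin (a 0) → R) × (Fin (c 0) → R) :=
      LinearEquiv.funCongrLeft R R finSumFinEquiv ≪≫ₗ
        LinearEquiv.sumArrowLequivProdArrow (Fin (a 0)) (Fin (c 0)) R R
    let θ : (Fin (a 0 + c 0) → R) →ₗ[R] B := (i ∘ₗ φ).coprod ψ ∘ₗ e.toLinearMap
    have hθ (x) : θ x = i (φ (e x).1) + ψ (e x).2 := rfl
    have hpi (x) : p (i x) = 0 := (hip _).2 ⟨x, rfl⟩
    refine ⟨θ, fun b => ?_, ?_⟩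
    · obtain ⟨z, hz⟩ := hχ (p b)
      obtain ⟨u, hu⟩ := (hip (b - ψ z)).1 (by rw [map_sub, hψ, hz, sub_self])
      obtain ⟨v, rfl⟩ := hφ u
      exact ⟨e.symm (v, z), by simp [hθ, hu]⟩
    · let i' : LinearMap.ker φ →ₗ[R] LinearMap.ker θ :=
        (e.symm.toLinearMap ∘ₗ LinearMap.inl R _ _).restrict (fun x hx => by
          rw [LinearMap.mem_ker] at hx
          simp [hθ, hx])
      let p' : LinearMap.ker θ →ₗ[R] LinearMap.ker χ :=
        (LinearMap.snd R _ _ ∘ₗ e.toLinearMap).restrict (fun x hx => by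
          rw [LinearMap.mem_ker, hθ] at hx
          have := congrArg p hx
          simpa [hψ, hpi] using this)
      have hi' (x) : e (i' x : Fin (a 0 + c 0) → R) = (x.1, 0) := e.apply_symm_apply _
      have hp' (x) : (p' x : Fin (c 0) → R) = (e x.1).2 := rfl
      refine ih hkA hkC i' p' ?_ ?_ ?_
      · intro x y hxy
        have := hi' x
        rw [hxy, hi'] at this
        exact Subtype.ext (Prod.ext_iff.1 this).1.symm
      · rintro ⟨z, hz⟩
        rw [LinearMap.mem_ker] at hz
        obtain ⟨u, hu⟩ := (hip (ψ z)).1 (by rw [hψ, hz])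
        obtain ⟨v, rfl⟩ := hφ u
        exact ⟨⟨e.symm (-v, z), by simp [hθ, hu]⟩, Subtype.ext (by simp [hp'])⟩
      · intro x
        constructor
        · intro hx
          have hx2 : (e x.1).2 = 0 := congrArg Subtype.val hx
          have hx1 := x.2
          rw [LinearMap.mem_ker, hθ, hx2, map_zero, add_zero] at hx1
          refine ⟨⟨(e x.1).1, hi (by rw [hx1, map_zero])⟩, Subtype.ext (e.injective ?_)⟩
          rw [hi', ← hx2]
        · rintro ⟨y, rfl⟩
          exact Subtype.ext (by rw [hp', hi']; rfl)

theorem prod {L : ℕ} {a b : ℕ → ℕ} {A B : Type u} [AddCommGroup A] [Module R A]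
    [AddCommGroup B] [Module R B]
    (hA : HasFreeResolution R L a A) (hB : HasFreeResolution R L b B) :
    HasFreeResolution R L (fun h => a h + b h) (A × B) :=
  hA.of_shortExact hB (LinearMap.inl R A B) (LinearMap.snd R A B) LinearMap.inl_injective
    LinearMap.snd_surjective Function.Exact.inl_snd

/-- The mapping cone of a lift of `A → B` to free resolutions resolves the cokernel. -/
theorem mappingCone {L : ℕ} {a b c : ℕ → ℕ} {A B C : Type u} [AddCommGroup A] [Module R A]
    [AddCommGroup B] [Module R B] [AddCommGroup C] [Module R C]
    (hA : HasFreeResolution R L a A) (hB : HasFreeResolution R (L + 1) b B)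
    (i : A →ₗ[R] B) (p : B →ₗ[R] C) (hi : Function.Injective i) (hp : Function.Surjective p)
    (hip : Function.Exact i p) (hc0 : c 0 = b 0) (hc : ∀ h, c (h + 1) = b (h + 1) + a h) :
    HasFreeResolution R (L + 1) c C := by
  obtain rfl : c = fun h => Nat.casesOn h (b 0) (fun h => b (h + 1) + a h) := by
    funext h
    cases h with
    | zero => exact hc0
    | succ h => exact hc h
  obtain ⟨φ, hφ, hk⟩ := hB
  refine ⟨p ∘ₗ φ, hp.comp hφ, ?_⟩
  let e := LinearEquiv.ofInjective i hi
  have he (x) : i (e.symm x) = x := congrArg Subtype.val (e.apply_symm_apply x)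
  let q : LinearMap.ker (p ∘ₗ φ) →ₗ[R] A :=
    e.symm.toLinearMap ∘ₗ φ.restrict (fun x hx => (hip _).1 hx)
  have hq (x) : i (q x) = φ x.1 := he _
  refine hk.of_shortExact hA (Submodule.inclusion (fun x hx => ?_)) q
    (Submodule.inclusion_injective _) (fun x => ?_) (fun x => ?_)
  · rw [LinearMap.mem_ker] at hx ⊢
    rw [LinearMap.comp_apply, hx, map_zero]
  · obtain ⟨y, hy⟩ := hφ (i x)
    refine ⟨⟨y, (hip _).2 ⟨x, hy.symm⟩⟩, hi ?_⟩
    rw [hq, hy]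
  · rw [← map_eq_zero_iff i hi, hq]
    constructor
    · exact fun h => ⟨⟨x.1, h⟩, rfl⟩
    · rintro ⟨y, rfl⟩
      exact y.2

theorem top : HasFreeResolution R 1 (fun h => if h = 0 then 1 else 0) (⊤ : Ideal R) := by
  let e : (Fin 1 → R) ≃ₗ[R] (⊤ : Ideal R) :=
    LinearEquiv.funUnique (Fin 1) R R ≪≫ₗ Submodule.topEquiv.symm
  refine ⟨e.toLinearMap, e.surjective, fun h => rfl, ?_⟩
  exact (Submodule.subsingleton_iff_eq_bot).2 e.ker

theorem mono {L L' : ℕ} (hL : L ≤ L') {r : ℕ → ℕ} {M : Type u} [AddCommGroup M] [Module R M]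
    (hM : HasFreeResolution R L r M) : HasFreeResolution R L' r M := by
  induction hL with
  | refl => exact hM
  | step _ ih => exact ih.succ

/-- If `x` is a nonzerodivisor modulo `A ≤ B`, then `0 → A → B × A → x B + A → 0` is exact. -/
theorem span_mul_sup {L : ℕ} {a b c : ℕ → ℕ} {A B : Ideal R} (hAB : A ≤ B) (x : R)
    (hx : ∀ y, x * y ∈ A → y ∈ A)
    (hA : HasFreeResolution R L a A) (hB : HasFreeResolution R (L + 1) b B)
    (hc0 : c 0 = b 0 + a 0) (hc : ∀ h, c (h + 1) = b (h + 1) + a (h + 1) + a h) :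
    HasFreeResolution R (L + 1) c (Ideal.span {x} * B ⊔ A : Ideal R) := by
  let i : A →ₗ[R] B × A := (Submodule.inclusion hAB).prod (-(x • LinearMap.id))
  let p : B × A →ₗ[R] (Ideal.span {x} * B ⊔ A : Ideal R) :=
    ((x • B.subtype).coprod A.subtype).codRestrict _ (fun z =>
      Submodule.add_mem_sup (Ideal.mul_mem_mul (Ideal.mem_span_singleton_self x) z.1.2) z.2.2)
  have hi1 (z) : ((i z).1 : R) = z := rfl
  have hi2 (z) : ((i z).2 : R) = -(x * z) := rfl
  have hp (z) : (p z : R) = x * z.1 + z.2 := rfl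
  refine hA.mappingCone (hB.prod hA.succ) i p ?_ ?_ ?_ hc0 hc
  · intro y z hyz
    exact Subtype.ext (by rw [← hi1, hyz, hi1])
  · rintro ⟨y, hy⟩
    obtain ⟨u, hu, v, hv, rfl⟩ := Submodule.mem_sup.1 hy
    obtain ⟨w, hw, rfl⟩ := Ideal.mem_span_singleton_mul.1 hu
    exact ⟨(⟨w, hw⟩, ⟨v, hv⟩), rfl⟩
  · intro z
    rw [← Subtype.coe_inj, hp]
    constructor
    · intro hz
      have hz' : (z.2 : R) = -(x * z.1) := by
        rw [ZeroMemClass.coe_zero] at hz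
        exact eq_neg_of_add_eq_zero_right hz
      have hmem : x * (z.1 : R) ∈ A := by
        rw [← neg_mem_iff, ← hz']
        exact z.2.2
      exact ⟨⟨z.1, hx _ hmem⟩, Prod.ext (Subtype.ext rfl) (Subtype.ext hz'.symm)⟩
    · rintro ⟨y, rfl⟩
      rw [hi1, hi2]
      simp

end HasFreeResolution

end FreeResolution

section PairwiseProducts

variable {R : Type u} [CommRing R] {ι : Type*}

/-- The ideal generated by the products `f i * f j` with `i ≠ j` in `S`. -/
def pairwiseProductIdeal (f : ι → R) (S : Set ι) : Ideal R :=
  Ideal.span {g | ∃ i ∈ S, ∃ j ∈ S, i ≠ j ∧ g = f i * f j}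

theorem pairwiseProductIdeal_le (f : ι → R) (S : Set ι) :
    pairwiseProductIdeal f S ≤ Ideal.span (f '' S) := by
  refine Ideal.span_le.2 ?_
  rintro _ ⟨i, hi, j, -, -, rfl⟩
  exact Ideal.mul_mem_right _ _ (Ideal.subset_span ⟨i, hi, rfl⟩)

theorem span_image_insert (f : ι → R) (S : Set ι) (a : ι) :
    Ideal.span (f '' insert a S) = Ideal.span {f a} * ⊤ ⊔ Ideal.span (f '' S) := by
  rw [Set.image_insert_eq, Ideal.span_insert, Ideal.mul_top]

theorem pairwiseProductIdeal_insert (f : ι → R) {S : Set ι} {a : ι} (ha : a ∉ S) :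
    pairwiseProductIdeal f (insert a S) =
      Ideal.span {f a} * Ideal.span (f '' S) ⊔ pairwiseProductIdeal f S := by
  apply le_antisymm
  · refine Ideal.span_le.2 ?_
    have key (j) (hj : j ∈ S) : f a * f j ∈
        Ideal.span {f a} * Ideal.span (f '' S) ⊔ pairwiseProductIdeal f S :=
      Ideal.mem_sup_left (Ideal.mul_mem_mul (Ideal.mem_span_singleton_self _)
        (Ideal.subset_span ⟨j, hj, rfl⟩))
    rintro _ ⟨i, rfl | hi, j, rfl | hj, hij, rfl⟩
    · exact absurd rfl hij
    · exact key j hj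
    · rw [mul_comm (f i)]
      exact key i hi
    · exact Ideal.mem_sup_right (Ideal.subset_span ⟨i, hi, j, hj, hij, rfl⟩)
  · refine sup_le ?_ (Ideal.span_mono ?_)
    · rw [Ideal.span_mul_span, Ideal.span_le]
      rintro _ ⟨_, rfl, _, ⟨j, hj, rfl⟩, rfl⟩
      exact Ideal.subset_span ⟨a, .inl rfl, j, .inr hj, fun h => ha (h ▸ hj), rfl⟩
    · rintro _ ⟨i, hi, j, hj, hij, rfl⟩
      exact ⟨i, .inr hi, j, .inr hj, hij, rfl⟩

/-- Each `f i` is a nonzerodivisor modulo the ideal generated by any finite set of other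
`f j`. -/
def IsPermutablyRegular (f : ι → R) : Prop :=
  ∀ (S : Finset ι) (i : ι), i ∉ S → ∀ y, f i * y ∈ Ideal.span (f '' S) → y ∈ Ideal.span (f '' S)

namespace IsPermutablyRegular

variable [DecidableEq ι] {f : ι → R}

theorem mem_pairwiseProductIdeal (hf : IsPermutablyRegular f) {S : Finset ι} (hS : S.Nonempty)
    {y : R} (hy : ∀ i ∈ S, y ∈ Ideal.span (f '' (S.erase i : Finset ι))) :
    y ∈ pairwiseProductIdeal f S := by
  obtain ⟨m, hm⟩ := hS
  obtain ⟨c, rfl⟩ := (Submodule.mem_span_image_finset_iff_exists_fun' R).1 (hy m hm)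
  refine Ideal.sum_mem _ fun i hi => ?_
  obtain ⟨-, hiS⟩ := Finset.mem_erase.1 hi
  have hrest : ∑ j ∈ (S.erase m).erase i, c j • f j ∈
      Ideal.span (f '' (S.erase i : Finset ι)) :=
    Ideal.sum_mem _ fun j hj => Ideal.mul_mem_left _ _
      (Ideal.subset_span ⟨j, by simp at hj ⊢; tauto, rfl⟩)
  have hyi := hy i hiS
  rw [← Finset.add_sum_erase _ _ hi] at hyi
  have hci := hf _ i (Finset.notMem_erase i S) (c i) (by
    rw [mul_comm]
    exact (Ideal.add_mem_iff_left _ hrest).1 hyi)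
  obtain ⟨b, hb⟩ := (Submodule.mem_span_image_finset_iff_exists_fun' R).1 hci
  rw [← hb, Finset.sum_smul]
  refine Ideal.sum_mem _ fun j hj => ?_
  obtain ⟨hji, hjS⟩ := Finset.mem_erase.1 hj
  rw [smul_eq_mul, smul_eq_mul, mul_assoc]
  exact Ideal.mul_mem_left _ _ (Ideal.subset_span ⟨j, hjS, i, hiS, hji, rfl⟩)

theorem mem_pairwiseProductIdeal_of_mul_mem (hf : IsPermutablyRegular f) {S : Finset ι} {a : ι}
    (ha : a ∉ S) {y : R} (hy : f a * y ∈ pairwiseProductIdeal f S) :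
    y ∈ pairwiseProductIdeal f S := by
  obtain rfl | hS := S.eq_empty_or_nonempty
  · have h0 : pairwiseProductIdeal f (∅ : Finset ι) = Ideal.span (f '' (∅ : Finset ι)) := by
      simp [pairwiseProductIdeal]
    rw [h0] at hy ⊢
    exact hf _ a ha y hy
  · refine hf.mem_pairwiseProductIdeal hS fun i hi =>
      hf _ a (fun h => ha (Finset.mem_of_mem_erase h)) y ?_
    refine (Ideal.span_le.2 ?_ : pairwiseProductIdeal f S ≤ _) hy
    rintro _ ⟨j, hj, k, hk, hjk, rfl⟩
    by_cases hji : j = i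
    · exact Ideal.mul_mem_left _ _ (Ideal.subset_span
        ⟨k, Finset.mem_erase.2 ⟨fun h => hjk (hji.trans h.symm), hk⟩, rfl⟩)
    · exact Ideal.mul_mem_right _ _ (Ideal.subset_span ⟨j, Finset.mem_erase.2 ⟨hji, hj⟩, rfl⟩)

theorem hasFreeResolution_span (hf : IsPermutablyRegular f) (S : Finset ι) :
    HasFreeResolution R S.card (fun h => S.card.choose (h + 1)) (Ideal.span (f '' S)) := by
  induction S using Finset.induction_on with
  | empty =>
    refine ⟨fun h => by simp, ?_⟩
    simpa using (inferInstance : Subsingleton (⊥ : Ideal R))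
  | insert a S ha ih =>
    rw [Finset.card_insert_of_notMem ha, Finset.coe_insert, span_image_insert]
    refine ih.span_mul_sup le_top (f a) (hf S a ha) (HasFreeResolution.top.mono (by simp)) ?_ ?_
    · simp [add_comm]
    · intro h
      rw [Nat.choose_succ_succ]
      simp [add_comm]

theorem hasFreeResolution_pairwiseProductIdeal (hf : IsPermutablyRegular f) (S : Finset ι) :
    HasFreeResolution R S.card (fun h => (h + 1) * S.card.choose (h + 2))
      (pairwiseProductIdeal f S) := by
  induction S using Finset.induction_on with
  | empty =>
    refine ⟨fun h => by simp, ?_⟩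
    have h0 : pairwiseProductIdeal f (∅ : Finset ι) = ⊥ := by simp [pairwiseProductIdeal]
    rw [h0]
    infer_instance
  | insert a S ha ih =>
    rw [Finset.card_insert_of_notMem ha, Finset.coe_insert,
      pairwiseProductIdeal_insert f (by simpa using ha)]
    refine ih.span_mul_sup (pairwiseProductIdeal_le f S) (f a)
      (fun y => hf.mem_pairwiseProductIdeal_of_mul_mem ha) (hf.hasFreeResolution_span S).succ ?_ ?_
    · simp [Nat.choose_succ_succ S.card 1]
    · intro h
      rw [Nat.choose_succ_succ S.card (h + 2)]
      ring

end IsPermutablyRegular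

end PairwiseProducts

section Homogeneous

namespace MvPolynomial

variable {σ K : Type*} [CommRing K]

theorem homogeneousComponent_mul_eq_zero {a : MvPolynomial σ K} {m i : ℕ}
    (ha : a.IsHomogeneous m) (hi : i < m) (y : MvPolynomial σ K) :
    homogeneousComponent i (a * y) = 0 := by
  classical
  ext s
  rw [coeff_homogeneousComponent, coeff_zero]
  split_ifs with hs
  · rw [coeff_mul]
    refine Finset.sum_eq_zero fun p hp => ?_
    rw [ha.coeff_eq_zero, zero_mul]
    rw [← Finset.HasAntidiagonal.mem_antidiagonal.1 hp, map_add] at hs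
    omega
  · rfl

theorem homogeneousComponent_mem_span {s : Set (MvPolynomial σ K)}
    (hs : ∀ x ∈ s, ∃ m, x.IsHomogeneous m) {x : MvPolynomial σ K} (hx : x ∈ Ideal.span s)
    (i : ℕ) : homogeneousComponent i x ∈ Ideal.span s := by
  let _ := gradedAlgebra (σ := σ) (R := K)
  have := Ideal.homogeneous_span (homogeneousSubmodule σ K) s (fun x hx => hs x hx) i hx
  rwa [← decomposition.decompose'_apply]

/-- Permuting a weakly regular sequence of homogeneous polynomials of positive degree. -/
theorem isWeaklyRegular_of_perm {rs rs' : List (MvPolynomial σ K)}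
    (hrs : RingTheory.Sequence.IsWeaklyRegular (MvPolynomial σ K) rs) (hperm : rs.Perm rs')
    (hhom : ∀ x ∈ rs, ∃ m, 0 < m ∧ x.IsHomogeneous m) :
    RingTheory.Sequence.IsWeaklyRegular (MvPolynomial σ K) rs' := by
  refine hrs.prototype_perm hperm fun a b ts hts => ?_
  intro T hT
  obtain ⟨m, hm, ha⟩ := hhom a (hts.subset (by simp))
  have hQ : (Ideal.ofList ts • ⊤ : Submodule (MvPolynomial σ K) (MvPolynomial σ K)) =
      Ideal.ofList ts := by rw [smul_eq_mul, Ideal.mul_top]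
  have hpow (k : ℕ) : ∀ z ∈ T, ∃ w ∈ T, z = a ^ k • w := by
    induction k with
    | zero => exact fun z hz => ⟨z, hz, by simp⟩
    | succ k ih =>
      intro z hz
      obtain ⟨w, hw, rfl⟩ := ih z hz
      rw [hT] at hw
      obtain ⟨v, hv, rfl⟩ := Submodule.mem_smul_pointwise_iff_exists _ _ _ |>.1 hw
      exact ⟨v, hv, by rw [smul_smul, pow_succ]⟩
  rw [eq_bot_iff]
  intro z hz
  obtain ⟨x, rfl⟩ := Submodule.Quotient.mk_surjective _ z
  rw [Submodule.mem_bot, Submodule.Quotient.mk_eq_zero, hQ, ← sum_homogeneousComponent x]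
  refine Ideal.sum_mem _ fun i _ => ?_
  obtain ⟨w, -, hw⟩ := hpow (i + 1) _ hz
  obtain ⟨y, rfl⟩ := Submodule.Quotient.mk_surjective _ w
  rw [← Submodule.Quotient.mk_smul, Submodule.Quotient.eq, hQ] at hw
  have hcomp := homogeneousComponent_mem_span (fun t ht => by
    obtain ⟨m, -, h⟩ := hhom t (hts.subset (by simp [show t ∈ ts from ht]))
    exact ⟨m, h⟩) hw i
  rwa [map_sub, smul_eq_mul, homogeneousComponent_mul_eq_zero (ha.pow (i + 1)) (by nlinarith),
    sub_zero] at hcomp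

theorem isPermutablyRegular_of_isWeaklyRegular {n : ℕ} {f : Fin n → MvPolynomial σ K}
    (hhom : ∀ j, ∃ m, 0 < m ∧ (f j).IsHomogeneous m)
    (hreg : RingTheory.Sequence.IsWeaklyRegular (MvPolynomial σ K) (List.ofFn f)) :
    IsPermutablyRegular f := by
  intro S i hi y hy
  have hperm : (List.finRange n).Perm (S.toList ++ i :: ((Finset.univ \ S).erase i).toList) := by
    refine (List.perm_ext_iff_of_nodup (List.nodup_finRange n) ?_).2 fun j => ?_
    · rw [List.nodup_append]
      refine ⟨S.nodup_toList, ?_, ?_⟩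
      · simp [Finset.nodup_toList]
      · intro s hs t ht hst
        subst hst
        simp only [Finset.mem_toList, List.mem_cons, Finset.mem_erase, Finset.mem_sdiff] at hs ht
        obtain rfl | ht := ht
        · exact hi hs
        · exact ht.2.2 hs
    · simp only [List.mem_finRange, List.mem_append, Finset.mem_toList, List.mem_cons,
        Finset.mem_erase, Finset.mem_sdiff, Finset.mem_univ, true_iff, true_and]
      tauto
  rw [List.ofFn_eq_map] at hreg
  have h := isWeaklyRegular_of_perm hreg (hperm.map f) (by simpa using hhom)
  rw [List.map_append, RingTheory.Sequence.isWeaklyRegular_append_iff, List.map_cons,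
    RingTheory.Sequence.isWeaklyRegular_cons_iff] at h
  have hQ : (Ideal.ofList (S.toList.map f) • ⊤ :
      Submodule (MvPolynomial σ K) (MvPolynomial σ K)) = Ideal.span (f '' S) := by
    rw [smul_eq_mul, Ideal.mul_top, Ideal.ofList]
    congr 1
    ext x
    simp
  have h := h.2.1
  rw [isSMulRegular_quotient_iff_mem_of_smul_mem, hQ] at h
  exact h y hy

end MvPolynomial

end Homogeneous

/-- Let `f_1,…,f_n` (`n ≥ 2`) be a regular sequence of homogeneous
polynomials of positive degree in `R = K[x_0,…,x_n]` and `I = (f_i f_j : i < j)`.  Then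
there is an exact sequence `0 → F_{n-2} → ⋯ → F_1 → F_0 → I → 0` with each `F_h` free of
rank `(h+1)·C(n,h+2)` (for `h > n-2` these ranks vanish, so the sequence is finite); in
particular `F_0` has rank `C(n,2)` and `F_{n-2}` has rank `n-1`. -/
theorem free_resolution_of_pairwise_products_of_regular_sequence
    (K : Type) [Field K] [Infinite K] (n : ℕ) (hn : 2 ≤ n)
    (f : Fin n → MvPolynomial (Fin (n + 1)) K) (d : Fin n → ℕ) (hd : ∀ j, 0 < d j)
    (hhom : ∀ j, (f j).IsHomogeneous (d j))
    (hreg : RingTheory.Sequence.IsRegular (MvPolynomial (Fin (n + 1)) K) (List.ofFn f)) :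
    ∃ (δ : (h : ℕ) →
        ((Fin ((h + 2) * Nat.choose n (h + 3)) → MvPolynomial (Fin (n + 1)) K) →ₗ[MvPolynomial (Fin (n + 1)) K]
          (Fin ((h + 1) * Nat.choose n (h + 2)) → MvPolynomial (Fin (n + 1)) K)))
      (ε : (Fin ((0 + 1) * Nat.choose n (0 + 2)) → MvPolynomial (Fin (n + 1)) K)
        →ₗ[MvPolynomial (Fin (n + 1)) K] MvPolynomial (Fin (n + 1)) K),
      LinearMap.range ε =
        (Ideal.span {g : MvPolynomial (Fin (n + 1)) K | ∃ i j : Fin n, i < j ∧ g = f i * f j} :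
          Ideal (MvPolynomial (Fin (n + 1)) K)) ∧
      LinearMap.range (δ 0) = LinearMap.ker ε ∧
      ∀ h : ℕ, LinearMap.range (δ (h + 1)) = LinearMap.ker (δ h) := by
  have hf : IsPermutablyRegular f :=
    isPermutablyRegular_of_isWeaklyRegular (fun j => ⟨d j, hd j, hhom j⟩) hreg.toIsWeaklyRegular
  have hres := hf.hasFreeResolution_pairwiseProductIdeal Finset.univ
  rw [Finset.card_univ, Fintype.card_fin] at hres
  obtain ⟨δ, ε, hε, hδ, hex⟩ := hres.exists_exact
  refine ⟨δ, (pairwiseProductIdeal f (Finset.univ : Finset (Fin n))).subtype ∘ₗ ε, ?_, ?_, hex⟩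
  · rw [LinearMap.range_comp, LinearMap.range_eq_top.2 hε, Submodule.map_top,
      Submodule.range_subtype, pairwiseProductIdeal]
    congr 1
    ext g
    constructor
    · rintro ⟨i, -, j, -, hij, rfl⟩
      obtain h | h := lt_or_gt_of_ne hij
      · exact ⟨i, j, h, rfl⟩
      · exact ⟨j, i, h, mul_comm _ _⟩
    · rintro ⟨i, j, hij, rfl⟩
      exact ⟨i, by simp, j, by simp, hij.ne, rfl⟩
  · rw [LinearMap.ker_comp_of_ker_eq_bot _ (Submodule.ker_subtype _), hδ]
end
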